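/- arXiv:0708.2510 — 2 statements merged into one kernel-verified Lean document; each statement's English description precedes it below -/
import Mathlib

section
/- Let H be a complex Hilbert space, J a signature operator on H, L a densely defined positive self-adjoint operator in H, and B := JL, and assume B is similar to a self-adjoint operator in H. Fix 0 < τ < ∞ and φ₊ ∈ H₊, φ₋ ∈ H₋. Then the strong solution ψ of the boundary value problem dψ/dx = −Bψ(x) (0 < x < τ), P₊ψ(0) = φ₊, P₋ψ(τ) = φ₋ is infinitely (strongly) differentiable on the open interval (0, τ). -/
open scoped ComplexOrder InnerProductSpace

noncomputable section

variable {H : Type*} [NormedAddCommGroup H] [InnerProductSpace ℂ H] [CompleteSpace H]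

/-- `J` is a signature operator: `J = J* = J⁻¹`. -/
def IsSignatureOperator (J : H →L[ℂ] H) : Prop :=
  IsSelfAdjoint J ∧ J.comp J = ContinuousLinearMap.id ℂ H

/-- The orthogonal projection onto `H₊ = ker (J - I)`, which equals `(I + J)/2`
for a signature operator `J`. -/
def Pplus (J : H →L[ℂ] H) : H →L[ℂ] H := (2⁻¹ : ℂ) • (ContinuousLinearMap.id ℂ H + J)

/-- The orthogonal projection onto `H₋ = ker (J + I)`, which equals `(I - J)/2`
for a signature operator `J`. -/
def Pminus (J : H →L[ℂ] H) : H →L[ℂ] H := (2⁻¹ : ℂ) • (ContinuousLinearMap.id ℂ H - J)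

/-- The composition `J ∘ L` of a bounded operator `J` with an unbounded operator `L`,
as an unbounded operator with the same domain as `L`. -/
def pmapComp (J : H →L[ℂ] H) (L : H →ₗ.[ℂ] H) : H →ₗ.[ℂ] H :=
  { domain := L.domain
    toFun := (J : H →ₗ[ℂ] H).comp L.toFun }

/-- `L` is a positive operator: `⟨L h, h⟩ > 0` for every nonzero `h ∈ dom L`. -/
def IsPositivePMap (L : H →ₗ.[ℂ] H) : Prop :=
  ∀ h : L.domain, (h : H) ≠ 0 → 0 < ⟪L h, (h : H)⟫_ℂ

/-- `B` is similar to a self-adjoint operator: there is a bounded operator `S` with bounded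
inverse mapping `dom B` onto the domain of a self-adjoint operator `A` such that
`A (S h) = S (B h)` for all `h ∈ dom B`. -/
def SimilarToSelfAdjoint (B : H →ₗ.[ℂ] H) : Prop :=
  ∃ (S : H ≃L[ℂ] H) (A : H →ₗ.[ℂ] H), IsSelfAdjoint A ∧
    (A.domain : Set H) = (fun h => S h) '' (B.domain : Set H) ∧
    ∀ (h : B.domain) (hSh : S (h : H) ∈ A.domain), A ⟨S (h : H), hSh⟩ = S (B h)

/-- `ψ` solves `ψ' = -B ψ + f` on the set `s` with a continuous derivative:
on `s`, `ψ` takes values in `dom B`, is differentiable with derivative `ψ'`,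
`ψ'` is continuous on `s`, and `ψ' x = -B (ψ x) + f x`. -/
def IsStrongSolutionOn (B : H →ₗ.[ℂ] H) (f : ℝ → H) (ψ : ℝ → H) (s : Set ℝ) : Prop :=
  ∃ ψ' : ℝ → H, ContinuousOn ψ' s ∧
    ∀ x ∈ s, HasDerivAt ψ (ψ' x) x ∧
      ∃ hx : ψ x ∈ B.domain, ψ' x = -(B ⟨ψ x, hx⟩) + f x

section
variable {E : Type*} [NormedAddCommGroup E] [InnerProductSpace ℝ E]

/-- `⟪u x, u y⟫` depends only on `x + y`, for `x, y ∈ (a, b)`. -/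
def HasSumKernelOn (u : ℝ → E) (a b : ℝ) : Prop :=
  ∃ F : ℝ → ℝ, ∀ x ∈ Set.Ioo a b, ∀ y ∈ Set.Ioo a b, inner ℝ (u x) (u y) = F (x + y)

namespace HasSumKernelOn

variable {u v : ℝ → E} {a b x r : ℝ}

theorem of_forall_eq (h : ∀ x ∈ Set.Ioo a b, ∀ y ∈ Set.Ioo a b, ∀ x' ∈ Set.Ioo a b,
    ∀ y' ∈ Set.Ioo a b, x + y = x' + y' → inner ℝ (u x) (u y) = inner ℝ (u x') (u y')) :
    HasSumKernelOn u a b := by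
  refine ⟨fun s => inner ℝ (u (s / 2)) (u (s / 2)), fun x hx y hy => ?_⟩
  have hm : (x + y) / 2 ∈ Set.Ioo a b :=
    ⟨by linarith [hx.1, hy.1], by linarith [hx.2, hy.2]⟩
  exact h x hx y hy _ hm _ hm (by ring)

theorem two_mul_norm_sub_le (hu : HasSumKernelOn u a b) (hr : 0 ≤ r)
    (ha : a < x - 2 * r) (hb : x + 2 * r < b) :
    2 * ‖u (x + r) - u (x - r)‖ ≤ ‖u (x + 2 * r) - u (x - 2 * r)‖ := by
  obtain ⟨F, hF⟩ := hu
  have m2 : x + 2 * r ∈ Set.Ioo a b := ⟨by linarith, by linarith⟩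
  have m1 : x + r ∈ Set.Ioo a b := ⟨by linarith, by linarith⟩
  have m0 : x ∈ Set.Ioo a b := ⟨by linarith, by linarith⟩
  have n1 : x - r ∈ Set.Ioo a b := ⟨by linarith, by linarith⟩
  have n2 : x - 2 * r ∈ Set.Ioo a b := ⟨by linarith, by linarith⟩
  have key : ‖u (x + 2 * r) - u (x - 2 * r)‖ ^ 2 = (2 * ‖u (x + r) - u (x - r)‖) ^ 2
      + ‖u (x + 2 * r) - (2 : ℝ) • u x + u (x - 2 * r)‖ ^ 2 := by
    rw [mul_pow]
    simp only [← real_inner_self_eq_norm_sq, inner_sub_left, inner_sub_right, inner_add_left,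
      inner_add_right, inner_smul_left, inner_smul_right, hF _ m2 _ m2, hF _ m2 _ m0,
      hF _ m2 _ n2, hF _ m1 _ m1, hF _ m1 _ n1, hF _ m0 _ m2, hF _ m0 _ m0, hF _ m0 _ n2,
      hF _ n1 _ m1, hF _ n1 _ n1, hF _ n2 _ m2, hF _ n2 _ m0, hF _ n2 _ n2, conj_trivial]
    ring_nf
  refine le_of_sq_le_sq ?_ (norm_nonneg _)
  rw [key]
  exact le_add_of_nonneg_right (sq_nonneg _)

theorem two_pow_mul_norm_sub_le (hu : HasSumKernelOn u a b) (hr : 0 ≤ r)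
    (ha : a < x - r) (hb : x + r < b) (n : ℕ) :
    2 ^ n * ‖u (x + r / 2 ^ n) - u (x - r / 2 ^ n)‖ ≤ ‖u (x + r) - u (x - r)‖ := by
  induction n with
  | zero => simp
  | succ n ih =>
    have hrn : 2 * (r / 2 ^ (n + 1)) = r / 2 ^ n := by rw [pow_succ]; field_simp
    have hle : r / 2 ^ n ≤ r := div_le_self hr (one_le_pow₀ one_le_two)
    have h := hu.two_mul_norm_sub_le (x := x) (r := r / 2 ^ (n + 1)) (by positivity)
      (by rw [hrn]; linarith) (by rw [hrn]; linarith)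
    rw [hrn] at h
    calc 2 ^ (n + 1) * ‖u (x + r / 2 ^ (n + 1)) - u (x - r / 2 ^ (n + 1))‖
        = 2 ^ n * (2 * ‖u (x + r / 2 ^ (n + 1)) - u (x - r / 2 ^ (n + 1))‖) := by ring
      _ ≤ 2 ^ n * ‖u (x + r / 2 ^ n) - u (x - r / 2 ^ n)‖ := by gcongr
      _ ≤ _ := ih

/-- An interior derivative estimate: `u` at two points controls the derivative between them. -/
theorem two_mul_norm_deriv_le {u' : E} (hu : HasSumKernelOn u a b) (hr : 0 < r)
    (ha : a < x - r) (hb : x + r < b) (hd : HasDerivAt u u' x) :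
    2 * r * ‖u'‖ ≤ ‖u (x + r) - u (x - r)‖ := by
  have hd₁ : HasDerivAt (fun t => u (x + t)) u' 0 := by
    have : HasDerivAt u u' (x + 0) := by simpa using hd
    exact this.comp_const_add x 0
  have hd₂ : HasDerivAt (fun t => u (x - t)) (-u') 0 := by
    have : HasDerivAt u u' (x - 0) := by simpa using hd
    exact this.comp_const_sub x 0
  have hd₃ := (hd₁.sub hd₂).tendsto_slope_zero
  have ht : Filter.Tendsto (fun n : ℕ => r / 2 ^ n) Filter.atTop (nhdsWithin 0 {0}ᶜ) := by
    refine tendsto_nhdsWithin_iff.2 ⟨?_, Filter.Eventually.of_forall fun n => ?_⟩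
    · have := (tendsto_pow_atTop_nhds_zero_of_lt_one (r := (1 / 2 : ℝ)) (by norm_num)
        (by norm_num)).const_mul r
      simpa [div_eq_mul_inv] using this
    · have : 0 < r / 2 ^ n := by positivity
      exact this.ne'
  have hlim := ((hd₃.comp ht).norm).const_mul r
  have h2 : ‖u' - -u'‖ = 2 * ‖u'‖ := by
    rw [sub_neg_eq_add, ← two_smul ℝ, norm_smul]; norm_num
  rw [h2] at hlim
  have := le_of_tendsto' hlim (b := ‖u (x + r) - u (x - r)‖) fun n => by
    have hn := hu.two_pow_mul_norm_sub_le hr.le ha hb n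
    have : r * (2 ^ n / r) = 2 ^ n := by field_simp
    simpa [norm_smul, abs_of_pos hr, ← mul_assoc, this] using hn
  linarith

theorem deriv (hu : HasSumKernelOn u a b)
    (hd : ∀ x ∈ Set.Ioo a b, HasDerivAt u (v x) x) : HasSumKernelOn v a b := by
  obtain ⟨F, hF⟩ := hu
  have key : ∀ x ∈ Set.Ioo a b, ∀ y ∈ Set.Ioo a b,
      Filter.Tendsto (fun t => t⁻¹ * t⁻¹ * (F (x + y + 2 * t) - 2 * F (x + y + t) + F (x + y)))
        (nhdsWithin 0 {0}ᶜ) (nhds (inner ℝ (v x) (v y))) := by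
    intro x hx y hy
    refine ((hd x hx).tendsto_slope_zero.inner (hd y hy).tendsto_slope_zero).congr' ?_
    have hnear : ∀ z ∈ Set.Ioo a b, ∀ᶠ t in nhdsWithin (0 : ℝ) {0}ᶜ, z + t ∈ Set.Ioo a b := by
      intro z hz
      refine Filter.Eventually.filter_mono nhdsWithin_le_nhds ?_
      have hc : ContinuousAt (fun t : ℝ => z + t) 0 := by fun_prop
      exact hc.eventually_mem (by simpa using isOpen_Ioo.mem_nhds hz)
    filter_upwards [hnear x hx, hnear y hy] with t hxt hyt
    simp only [inner_sub_left, inner_sub_right, inner_smul_left, inner_smul_right,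
      hF _ hxt _ hyt, hF _ hxt _ hy, hF _ hx _ hyt, hF _ hx _ hy, conj_trivial]
    ring_nf
  refine of_forall_eq fun x hx y hy x' hx' y' hy' hs => ?_
  have h := key x hx y hy
  rw [hs] at h
  exact tendsto_nhds_unique h (key x' hx' y' hy')

theorem translates {c d α β γ h k : ℝ} (hu : HasSumKernelOn u a b)
    (hc : a ≤ c) (hd : d ≤ b) (hch : a ≤ c + h) (hdh : d + h ≤ b)
    (hck : a ≤ c + k) (hdk : d + k ≤ b) :
    HasSumKernelOn (fun y => α • u (y + h) + β • u (y + k) + γ • u y) c d := by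
  obtain ⟨F, hF⟩ := hu
  refine of_forall_eq fun x hx y hy x' hx' y' hy' hs => ?_
  have m : ∀ z ∈ Set.Ioo c d, z ∈ Set.Ioo a b ∧ z + h ∈ Set.Ioo a b ∧ z + k ∈ Set.Ioo a b :=
    fun z hz => ⟨⟨by linarith [hz.1], by linarith [hz.2]⟩,
      ⟨by linarith [hz.1], by linarith [hz.2]⟩, ⟨by linarith [hz.1], by linarith [hz.2]⟩⟩
  have expand : ∀ z ∈ Set.Ioo c d, ∀ w ∈ Set.Ioo c d,
      inner ℝ (α • u (z + h) + β • u (z + k) + γ • u z)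
        (α • u (w + h) + β • u (w + k) + γ • u w) =
      α * α * F (z + w + 2 * h) + 2 * α * β * F (z + w + h + k) + β * β * F (z + w + 2 * k)
        + 2 * α * γ * F (z + w + h) + 2 * β * γ * F (z + w + k) + γ * γ * F (z + w) := by
    intro z hz w hw
    obtain ⟨z0, z1, z2⟩ := m z hz
    obtain ⟨w0, w1, w2⟩ := m w hw
    simp only [inner_add_left, inner_add_right, inner_smul_left, inner_smul_right,
      hF _ z0 _ w0, hF _ z0 _ w1, hF _ z0 _ w2, hF _ z1 _ w0, hF _ z1 _ w1, hF _ z1 _ w2,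
      hF _ z2 _ w0, hF _ z2 _ w1, hF _ z2 _ w2, conj_trivial]
    ring_nf
  rw [expand x hx y hy, expand x' hx' y' hy', hs]

theorem differentiableAt_deriv [CompleteSpace E] (hu : HasSumKernelOn u a b)
    (hd : ∀ x ∈ Set.Ioo a b, HasDerivAt u (v x) x) (hx : x ∈ Set.Ioo a b) :
    DifferentiableAt ℝ v x := by
  obtain ⟨r, hr, har, hbr⟩ : ∃ r > 0, a ≤ x - 3 * r ∧ x + 3 * r ≤ b := by
    refine ⟨min (x - a) (b - x) / 3, ?_, ?_, ?_⟩
    · have := hx.1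
      have := hx.2
      have : 0 < min (x - a) (b - x) := lt_min (by linarith) (by linarith)
      positivity
    · linarith [min_le_left (x - a) (b - x)]
    · linarith [min_le_right (x - a) (b - x)]
  have estimate : ∀ h k : ℝ, |h| < r → |k| < r →
      2 * r * dist (h⁻¹ • (v (x + h) - v x)) (k⁻¹ • (v (x + k) - v x)) ≤
        dist (h⁻¹ • (u (x + r + h) - u (x + r))) (k⁻¹ • (u (x + r + k) - u (x + r))) +
        dist (h⁻¹ • (u (x - r + h) - u (x - r))) (k⁻¹ • (u (x - r + k) - u (x - r))) := by
    intro h k hh hk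
    rw [abs_lt] at hh hk
    have hD := hu.translates (c := x - 2 * r) (d := x + 2 * r) (α := h⁻¹) (β := -k⁻¹)
      (γ := k⁻¹ - h⁻¹) (h := h) (k := k) (by linarith) (by linarith) (by linarith) (by linarith)
      (by linarith) (by linarith)
    have hderiv : HasDerivAt (fun y => h⁻¹ • u (y + h) + (-k⁻¹) • u (y + k) + (k⁻¹ - h⁻¹) • u y)
        (h⁻¹ • v (x + h) + (-k⁻¹) • v (x + k) + (k⁻¹ - h⁻¹) • v x) x :=
      ((((hd (x + h) ⟨by linarith, by linarith⟩).comp_add_const x h).const_smul h⁻¹).add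
        (((hd (x + k) ⟨by linarith, by linarith⟩).comp_add_const x k).const_smul (-k⁻¹))).add
        ((hd x hx).const_smul (k⁻¹ - h⁻¹))
    have key := (hD.two_mul_norm_deriv_le hr (by linarith) (by linarith) hderiv).trans
      (norm_sub_le _ _)
    have rearrange : ∀ p q w : E, h⁻¹ • p + (-k⁻¹) • q + (k⁻¹ - h⁻¹) • w =
        h⁻¹ • (p - w) - k⁻¹ • (q - w) := fun p q w => by module
    simpa only [rearrange, ← dist_eq_norm] using key
  have hcauchy : ∀ z ∈ Set.Ioo a b, Filter.Tendsto
      (fun p : ℝ × ℝ => dist (p.1⁻¹ • (u (z + p.1) - u z)) (p.2⁻¹ • (u (z + p.2) - u z)))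
      (nhdsWithin 0 {0}ᶜ ×ˢ nhdsWithin 0 {0}ᶜ) (nhds 0) := by
    intro z hz
    have ht := (hd z hz).tendsto_slope_zero
    simpa using (ht.comp Filter.tendsto_fst).dist (ht.comp Filter.tendsto_snd)
  have hsmall : ∀ᶠ t in nhdsWithin (0 : ℝ) {0}ᶜ, |t| < r :=
    Filter.Eventually.filter_mono nhdsWithin_le_nhds
      (continuous_abs.continuousAt.eventually_lt_const (by simpa using hr))
  have hv : Cauchy (Filter.map (fun t => t⁻¹ • (v (x + t) - v x)) (nhdsWithin (0 : ℝ) {0}ᶜ)) := by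
    rw [cauchy_map_iff]
    refine ⟨inferInstance, tendsto_uniformity_iff_dist_tendsto_zero.2 ?_⟩
    have hsum := ((hcauchy (x + r) ⟨by linarith, by linarith⟩).add
      (hcauchy (x - r) ⟨by linarith, by linarith⟩)).const_mul (2 * r)⁻¹
    rw [add_zero, mul_zero] at hsum
    refine squeeze_zero' (Filter.Eventually.of_forall fun _ => dist_nonneg) ?_ hsum
    filter_upwards [hsmall.prod_mk hsmall] with p hp
    rw [le_inv_mul_iff₀ (by positivity)]
    exact estimate p.1 p.2 hp.1 hp.2
  obtain ⟨w, hw⟩ := CompleteSpace.complete hv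
  exact (hasDerivAt_iff_tendsto_slope_zero.2 hw).differentiableAt

theorem contDiffOn [CompleteSpace E] (hu : HasSumKernelOn u a b)
    (hd : DifferentiableOn ℝ u (Set.Ioo a b)) : ContDiffOn ℝ (⊤ : ℕ∞) u (Set.Ioo a b) := by
  refine contDiffOn_infty.2 fun n => ?_
  induction n generalizing u with
  | zero => exact contDiffOn_zero.2 hd.continuousOn
  | succ n ih =>
    have hd' : ∀ x ∈ Set.Ioo a b, HasDerivAt u (_root_.deriv u x) x := fun x hx =>
      (hd.differentiableAt (isOpen_Ioo.mem_nhds hx)).hasDerivAt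
    have hdd : DifferentiableOn ℝ (_root_.deriv u) (Set.Ioo a b) := fun x hx =>
      (hu.differentiableAt_deriv hd' hx).differentiableWithinAt
    push_cast
    exact (contDiffOn_succ_iff_deriv_of_isOpen isOpen_Ioo).2
      ⟨hd, by simp, ih (hu.deriv hd') hdd⟩

end HasSumKernelOn
end

/-- Differentiable solutions of `u' = -A u` on an open interval are smooth if `A` is formally
self-adjoint, because `⟪u x, u y⟫` then depends only on `x + y`. -/
theorem LinearPMap.IsFormalAdjoint.contDiffOn {A : H →ₗ.[ℂ] H} (hA : A.IsFormalAdjoint A)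
    {u : ℝ → H} {a b : ℝ} (hmem : ∀ x ∈ Set.Ioo a b, u x ∈ A.domain)
    (hd : ∀ x (hx : x ∈ Set.Ioo a b), HasDerivAt u (-A ⟨u x, hmem x hx⟩) x) :
    ContDiffOn ℝ (⊤ : ℕ∞) u (Set.Ioo a b) := by
  let _ : InnerProductSpace ℝ H := InnerProductSpace.complexToReal
  refine HasSumKernelOn.contDiffOn (E := H) ?_ fun x hx =>
    (hd x hx).differentiableAt.differentiableWithinAt
  refine HasSumKernelOn.of_forall_eq fun x hx y hy x' hx' y' hy' hs => ?_
  have hconvex : Convex ℝ (Set.Ioo a b ∩ Set.Ioo (x + y - b) (x + y - a)) :=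
    (convex_Ioo a b).inter (convex_Ioo _ _)
  have hderiv : ∀ t ∈ Set.Ioo a b ∩ Set.Ioo (x + y - b) (x + y - a),
      HasDerivAt (fun t => ⟪u t, u (x + y - t)⟫_ℂ) 0 t := by
    rintro t ⟨ht, ht'⟩
    have hst : x + y - t ∈ Set.Ioo a b := ⟨by linarith [ht'.2], by linarith [ht'.1]⟩
    have h := (hd t ht).inner ℂ ((hd _ hst).comp_const_sub (x + y) t)
    have hsymm := hA ⟨u t, hmem t ht⟩ ⟨u (x + y - t), hmem _ hst⟩
    rwa [neg_neg, inner_neg_left, hsymm, add_neg_cancel] at h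
  have hle := hconvex.norm_image_sub_le_of_norm_hasDerivWithin_le (C := 0)
    (fun t ht => (hderiv t ht).hasDerivWithinAt) (fun _ _ => by simp)
    (x := x') (y := x) ⟨hx', by linarith [hy'.2], by linarith [hy'.1]⟩
    ⟨hx, by linarith [hy.2], by linarith [hy.1]⟩
  rw [zero_mul, norm_le_zero_iff, sub_eq_zero, add_sub_cancel_left, hs,
    add_sub_cancel_left] at hle
  exact congrArg Complex.re hle

/-- Smoothness: under the assumptions of Theorem 2.1 the strong solution of
the boundary value problem is infinitely (strongly) differentiable on `(0, τ)`. -/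
theorem statement4 (J : H →L[ℂ] H) (hJ : IsSignatureOperator J)
    (L : H →ₗ.[ℂ] H) (hdense : Dense (L.domain : Set H))
    (hLsa : IsSelfAdjoint L) (hLpos : IsPositivePMap L)
    (hsim : SimilarToSelfAdjoint (pmapComp J L))
    (τ : ℝ) (hτ : 0 < τ)
    (φp φm : H) (hφp : J φp = φp) (hφm : J φm = -φm)
    (ψ : ℝ → H)
    (hcont : ContinuousOn ψ (Set.Icc 0 τ))
    (hsol : IsStrongSolutionOn (pmapComp J L) (fun _ => 0) ψ (Set.Ioo 0 τ))
    (hbc0 : Pplus J (ψ 0) = φp) (hbcτ : Pminus J (ψ τ) = φm) :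
    ContDiffOn ℝ (⊤ : ℕ∞) ψ (Set.Ioo 0 τ) := by
  obtain ⟨S, A, hA, hdom, hSA⟩ := hsim
  obtain ⟨ψ', -, hψ⟩ := hsol
  have hAA : A.IsFormalAdjoint A := by
    have h := LinearPMap.adjoint_isFormalAdjoint hA.dense_domain
    rwa [LinearPMap.isSelfAdjoint_def.1 hA] at h
  have hmem : ∀ x ∈ Set.Ioo 0 τ, S (ψ x) ∈ A.domain := by
    intro x hx
    obtain ⟨-, hxB, -⟩ := hψ x hx
    have : S (ψ x) ∈ (A.domain : Set H) := hdom ▸ ⟨ψ x, hxB, rfl⟩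
    exact this
  have hd : ∀ x (hx : x ∈ Set.Ioo 0 τ),
      HasDerivAt (fun y => S (ψ y)) (-A ⟨S (ψ x), hmem x hx⟩) x := by
    intro x hx
    obtain ⟨hder, hxB, heq⟩ := hψ x hx
    rw [hSA ⟨ψ x, hxB⟩ (hmem x hx), ← map_neg, ← add_zero (-_), ← heq]
    exact ((S : H →L[ℂ] H).restrictScalars ℝ).hasFDerivAt.comp_hasDerivAt x hder
  simpa [Function.comp_def] using
    ((S.symm : H →L[ℂ] H).restrictScalars ℝ).contDiff.comp_contDiffOn
      (hAA.contDiffOn hmem hd)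

end
end

section
/- Let H be a complex Hilbert space, J a signature operator on H, L a densely defined positive self-adjoint operator in H, and B := JL, and assume B is similar to a self-adjoint operator in H. Fix 0 < τ < ∞ and let f : [0, τ] → H be Hölder continuous, i.e. there exist K > 0 and k ∈ (0, 1] with ‖f(x) − f(y)‖ ≤ K |x − y|^k for all x, y ∈ [0, τ]. Then for every φ₊ ∈ H₊ and φ₋ ∈ H₋ there exists a unique function ψ : [0, τ] → H which is continuous on [0, τ], continuously differentiable on (0, τ), satisfies ψ(x) ∈ dom B and ψ′(x) = −Bψ(x) + f(x) for all x ∈ (0, τ), and satisfies P₊ψ(0) = φ₊ and P₋ψ(τ) = φ₋. -/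
open scoped ComplexOrder InnerProductSpace

noncomputable section

variable {H : Type*} [NormedAddCommGroup H] [InnerProductSpace ℂ H] [CompleteSpace H]

section OperatorEquation

open Filter Topology Set

set_option linter.unusedSectionVars false

theorem mem_graph_iff_forall_inner {A : H →ₗ.[ℂ] H} (hA : IsSelfAdjoint A) {x y : H} :
    (x, y) ∈ A.graph ↔ ∀ a b, (a, b) ∈ A.graph → ⟪b, x⟫_ℂ = ⟪a, y⟫_ℂ := by
  conv_lhs => rw [← LinearPMap.isSelfAdjoint_def.1 hA,
    LinearPMap.adjoint_graph_eq_graph_adjoint hA.dense_domain]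
  simp [Submodule.mem_adjoint_iff, sub_eq_zero]

theorem inner_graph_symm {A : H →ₗ.[ℂ] H} (hA : IsSelfAdjoint A) {a b x y : H}
    (hab : (a, b) ∈ A.graph) (hxy : (x, y) ∈ A.graph) : ⟪b, x⟫_ℂ = ⟪a, y⟫_ℂ :=
  (mem_graph_iff_forall_inner hA).1 hxy a b hab

theorem graph_unique {A : H →ₗ.[ℂ] H} {x y z : H}
    (h : (x, y) ∈ A.graph) (h' : (x, z) ∈ A.graph) : y = z :=
  LinearPMap.mem_graph_snd_inj' A h h' rfl

theorem exists_resolvent_of_sq {A : H →ₗ.[ℂ] H} (hA : IsSelfAdjoint A) :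
    ∃ R E : H →L[ℂ] H, ∀ y, (R y, E y) ∈ A.graph ∧ (E y, y - R y) ∈ A.graph := by
  let e := WithLp.prodContinuousLinearEquiv 2 ℂ H H
  let G : Submodule ℂ (WithLp 2 (H × H)) := A.graph.comap (e : WithLp 2 (H × H) →ₗ[ℂ] H × H)
  have hG : IsClosed (G : Set (WithLp 2 (H × H))) := by
    have h : IsClosed (A.graph : Set (H × H)) := hA.isClosed
    exact h.preimage e.continuous
  have : CompleteSpace G := hG.completeSpace_coe
  let T : H →L[ℂ] H × H :=
    e.toContinuousLinearMap ∘L G.starProjection ∘L e.symm.toContinuousLinearMap ∘L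
      ContinuousLinearMap.inl ℂ H H
  refine ⟨ContinuousLinearMap.fst ℂ H H ∘L T, ContinuousLinearMap.snd ℂ H H ∘L T, fun y => ?_⟩
  have hmem : T y ∈ A.graph := G.starProjection_apply_mem (e.symm (y, 0))
  refine ⟨hmem, (mem_graph_iff_forall_inner hA).2 fun a b hab => ?_⟩
  have hw : e.symm (a, b) ∈ G := by simpa [G] using hab
  have h := G.sub_starProjection_mem_orthogonal (e.symm (y, 0)) _ hw
  rw [WithLp.prod_inner_apply] at h
  have h1 : ⟪a, y - (T y).1⟫_ℂ + ⟪b, 0 - (T y).2⟫_ℂ = 0 := h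
  rw [zero_sub, inner_neg_right, ← sub_eq_add_neg, sub_eq_zero] at h1
  exact h1.symm

theorem denseRange_of_selfAdjoint_injective {T : H →L[ℂ] H} (hT : IsSelfAdjoint T)
    (hinj : Function.Injective T) : DenseRange T := by
  have h : (LinearMap.range (T : H →ₗ[ℂ] H)).topologicalClosure = ⊤ := by
    rw [Submodule.topologicalClosure_eq_top_iff, Submodule.eq_bot_iff]
    intro x hx
    refine hinj ((map_zero T).symm ▸ ext_inner_left ℂ fun v => ?_)
    have := hx (T v) ⟨v, rfl⟩
    rw [inner_zero_right, ← this, ← ContinuousLinearMap.adjoint_inner_left, hT.adjoint_eq]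
  rw [DenseRange, dense_iff_closure_eq]
  have h2 := congrArg (fun p : Submodule ℂ H => (p : Set H)) h
  simpa [Submodule.topologicalClosure_coe, LinearMap.coe_range] using h2

theorem eq_of_mul_eq_of_denseRange {X Y N : H →L[ℂ] H} (hN : DenseRange N)
    (h : X * N = Y * N) : X = Y := by
  have : (X : H → H) = Y := hN.equalizer X.continuous Y.continuous
    (funext fun v => DFunLike.congr_fun h v)
  exact DFunLike.coe_injective this

/-- The bounded transform `D = A (1 + A²)^{-1/2}`, `N = (1 + A²)^{-1/2}` of a self-adjoint `A`. -/
theorem exists_bounded_transform {A : H →ₗ.[ℂ] H} (hA : IsSelfAdjoint A) :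
    ∃ D N : H →L[ℂ] H, IsSelfAdjoint D ∧ ‖D‖ ≤ 1 ∧ 0 ≤ N ∧ D * D + N * N = 1 ∧ Commute D N ∧
      Function.Injective N ∧ (∀ y, (N y, D y) ∈ A.graph) ∧
      ∀ M : H →L[ℂ] H, (∀ a b, (a, b) ∈ A.graph → (M a, M b) ∈ A.graph) → Commute M D := by
  obtain ⟨R, E, hRE⟩ := exists_resolvent_of_sq hA
  have hR1 := fun y => (hRE y).1
  have hR2 := fun y => (hRE y).2
  have uniq : ∀ {x y z : H}, (x, y) ∈ A.graph → (y, z - x) ∈ A.graph → x = R z := by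
    intro x y z h1 h2
    have h3 := A.graph.sub_mem h1 (hR1 z)
    have h4 := A.graph.sub_mem h2 (hR2 z)
    simp only [Prod.mk_sub_mk, sub_sub_sub_cancel_left] at h3 h4
    have h5 := inner_graph_symm hA h3 h4
    have h6 : ⟪x - R z, R z - x⟫_ℂ = -⟪x - R z, x - R z⟫_ℂ := by
      rw [← inner_neg_right, neg_sub]
    rw [h6] at h5
    have h7 : ‖x - R z‖ ^ 2 + ‖y - E z‖ ^ 2 = 0 := by
      have := congrArg Complex.re h5
      rw [Complex.neg_re] at this
      have e1 := inner_self_eq_norm_sq (𝕜 := ℂ) (x - R z)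
      have e2 := inner_self_eq_norm_sq (𝕜 := ℂ) (y - E z)
      simp only [RCLike.re_to_complex] at e1 e2
      rw [e1, e2] at this
      linarith
    have h8 : ‖x - R z‖ = 0 := by nlinarith [sq_nonneg ‖x - R z‖, sq_nonneg ‖y - E z‖]
    exact sub_eq_zero.1 (norm_eq_zero.1 h8)
  have hRsymm : ∀ y z, ⟪R y, z⟫_ℂ = ⟪R y, R z⟫_ℂ + ⟪E y, E z⟫_ℂ := by
    intro y z
    rw [inner_graph_symm hA (hR1 y) (hR2 z), inner_sub_right]
    ring
  have hRpos : (0 : H →L[ℂ] H) ≤ R := by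
    rw [ContinuousLinearMap.nonneg_iff_isPositive, ContinuousLinearMap.isPositive_def']
    constructor
    · rw [ContinuousLinearMap.isSelfAdjoint_iff_isSymmetric]
      intro y z
      simp only [ContinuousLinearMap.coe_coe]
      rw [hRsymm, ← inner_conj_symm y (R z), hRsymm z y]
      simp
    · intro x
      rw [ContinuousLinearMap.reApplyInnerSelf_apply, hRsymm, map_add]
      exact add_nonneg inner_self_nonneg inner_self_nonneg
  have hRsa : IsSelfAdjoint R := .of_nonneg hRpos
  have hRs : ∀ y z, ⟪R y, z⟫_ℂ = ⟪y, R z⟫_ℂ := fun y z => by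
    rw [← ContinuousLinearMap.adjoint_inner_right, hRsa.adjoint_eq]
  have hEs : ∀ y z, ⟪E y, z⟫_ℂ = ⟪y, E z⟫_ℂ := by
    intro y z
    have h1 := inner_graph_symm hA (hR2 y) (hR1 z)
    have h2 := inner_graph_symm hA (hR1 y) (hR2 z)
    have h3 := inner_graph_symm hA (hR1 y) (hR1 z)
    have h4 := inner_graph_symm hA (hR2 y) (hR2 z)
    rw [inner_sub_left] at h4
    rw [inner_sub_right] at h4
    rw [h3] at h4
    linear_combination -h4
  have hEsa : IsSelfAdjoint E := by
    rw [ContinuousLinearMap.isSelfAdjoint_iff_isSymmetric]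
    exact hEs
  have hcommR : ∀ M : H →L[ℂ] H, (∀ a b, (a, b) ∈ A.graph → (M a, M b) ∈ A.graph) →
      Commute M R ∧ Commute M E := by
    intro M hM
    have h : ∀ y, M (R y) = R (M y) := fun y =>
      uniq (hM _ _ (hR1 y)) (by simpa using hM _ _ (hR2 y))
    refine ⟨ContinuousLinearMap.ext h, ContinuousLinearMap.ext fun y => ?_⟩
    exact graph_unique (hM _ _ (hR1 y)) ((h y).symm ▸ hR1 (M y))
  have hRA : ∀ a b, (a, b) ∈ A.graph → R b = E a := by
    intro a b hab
    refine ext_inner_right ℂ fun z => ?_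
    rw [hRs, inner_graph_symm hA hab (hR1 z), hEs]
  have hRgraph : ∀ a b, (a, b) ∈ A.graph → (R a, R b) ∈ A.graph := fun a b hab => by
    rw [hRA a b hab]; exact hR1 a
  have hRE_comm : Commute R E := (hcommR R hRgraph).2
  have hRinj : Function.Injective R := by
    rw [injective_iff_map_eq_zero]
    intro y hy
    have h0 : E y = 0 := graph_unique (hR1 y) (by rw [hy]; exact A.graph.zero_mem)
    have h1 := hR2 y
    rw [hy, h0, sub_zero] at h1
    exact graph_unique h1 A.graph.zero_mem
  have hEE : ∀ y, E (E y) = R y - R (R y) := by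
    intro y
    have h1 := hR1 (E y)
    rw [show R (E y) = E (R y) from DFunLike.congr_fun hRE_comm.eq y] at h1
    exact graph_unique h1 (hR2 (R y))
  set N : H →L[ℂ] H := CFC.sqrt R with hN
  have hNpos : 0 ≤ N := CFC.sqrt_nonneg R
  have hNsa : IsSelfAdjoint N := .of_nonneg hNpos
  have hNN : N * N = R := CFC.sqrt_mul_sqrt_self R
  have hNs : ∀ y z, ⟪N y, z⟫_ℂ = ⟪y, N z⟫_ℂ := fun y z => by
    rw [← ContinuousLinearMap.adjoint_inner_right, hNsa.adjoint_eq]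
  have hNNa : ∀ y, N (N y) = R y := fun y => DFunLike.congr_fun hNN y
  have hNinj : Function.Injective N := fun x y hxy => hRinj (by rw [← hNNa, ← hNNa, hxy])
  have hNdense := denseRange_of_selfAdjoint_injective hNsa hNinj
  have hcommN : ∀ M : H →L[ℂ] H, Commute M R → Commute M N := by
    intro M hM
    rw [hN, CFC.sqrt_eq_cfc]
    exact (hM.symm.cfc_nnreal _).symm
  have hbound : ∀ a b, (a, b) ∈ A.graph → ‖N b‖ ≤ ‖a‖ := by
    intro a b hab
    have h1 : ⟪N b, N b⟫_ℂ = ⟪a, a⟫_ℂ - ⟪N a, N a⟫_ℂ := by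
      rw [hNs, hNNa, hRA a b hab, inner_graph_symm hA hab (hR2 a), inner_sub_right, hNs a,
        hNNa]
    have h2 := congrArg Complex.re h1
    rw [Complex.sub_re] at h2
    have e1 := inner_self_eq_norm_sq (𝕜 := ℂ) (N b)
    have e2 := inner_self_eq_norm_sq (𝕜 := ℂ) a
    have e3 := inner_self_eq_norm_sq (𝕜 := ℂ) (N a)
    simp only [RCLike.re_to_complex] at e1 e2 e3
    rw [e1, e2, e3] at h2
    exact le_of_sq_le_sq (by nlinarith [sq_nonneg ‖N a‖]) (norm_nonneg _)
  have hNmem : ∀ y, N y ∈ A.domain := by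
    intro y
    have h : N y ∈ A.adjoint.domain := by
      rw [LinearPMap.mem_adjoint_domain_iff]
      refine AddMonoidHomClass.continuous_of_bound _ ‖y‖ fun w => ?_
      change ‖⟪N y, A w⟫_ℂ‖ ≤ ‖y‖ * ‖(w : H)‖
      rw [hNs]
      exact (norm_inner_le_norm _ _).trans
        (mul_le_mul_of_nonneg_left (hbound _ _ (A.mem_graph w)) (norm_nonneg _))
    rwa [LinearPMap.isSelfAdjoint_def.1 hA] at h
  let D₀ : H →ₗ[ℂ] H := A.toFun.comp ((N : H →ₗ[ℂ] H).codRestrict A.domain hNmem)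
  have hD₀ : ∀ y, (N y, D₀ y) ∈ A.graph := fun y => A.mem_graph ⟨N y, hNmem y⟩
  have hD₀bound : ∀ y, ‖D₀ y‖ ≤ 1 * ‖y‖ := by
    intro y
    have h : ∀ w : H, ‖⟪w, D₀ y⟫_ℂ‖ ≤ ‖w‖ * ‖y‖ := by
      intro w
      refine hA.dense_domain.induction (P := fun w => ‖⟪w, D₀ y⟫_ℂ‖ ≤ ‖w‖ * ‖y‖) ?_ ?_ w
      · intro w hw
        have hg := A.mem_graph ⟨w, hw⟩
        rw [← inner_graph_symm hA hg (hD₀ y), ← hNs]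
        exact (norm_inner_le_norm _ _).trans
          (mul_le_mul_of_nonneg_right (hbound _ _ hg) (norm_nonneg _))
      · exact isClosed_le (by fun_prop) (by fun_prop)
    have h1 := h (D₀ y)
    rw [inner_self_eq_norm_sq_to_K] at h1
    simp only [norm_pow, RCLike.norm_ofReal, abs_norm] at h1
    rw [one_mul]
    by_contra hlt
    push Not at hlt
    nlinarith [norm_nonneg y, norm_nonneg (D₀ y)]
  let D : H →L[ℂ] H := D₀.mkContinuous 1 hD₀bound
  have hD : ∀ y, (N y, D y) ∈ A.graph := hD₀
  have hDN : D * N = E := ContinuousLinearMap.ext fun y =>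
    graph_unique (hNNa y ▸ hD (N y)) (hR1 y)
  have hNE : Commute E N := hcommN E hRE_comm.symm
  have hDsa : IsSelfAdjoint D := by
    have h1 : N * star D = E := by
      have := congrArg star hDN
      rwa [star_mul, hNsa.star_eq, hEsa.star_eq] at this
    refine eq_of_mul_eq_of_denseRange hNdense (hDN.symm ▸ ?_)
    refine ContinuousLinearMap.ext fun y => hNinj ?_
    have h2 : N * (star D * N) = N * E := by rw [← mul_assoc, h1, hNE.eq]
    exact DFunLike.congr_fun h2 y
  have hcommDN : Commute D N := by
    have h1 := congrArg star hDN
    rw [star_mul, hNsa.star_eq, hEsa.star_eq, hDsa.star_eq] at h1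
    exact hDN.trans h1.symm
  have hRdense : DenseRange R := denseRange_of_selfAdjoint_injective hRsa hRinj
  refine ⟨D, N, hDsa, D₀.mkContinuous_norm_le zero_le_one _, hNpos, ?_, hcommDN, hNinj, hD, ?_⟩
  · refine eq_of_mul_eq_of_denseRange hRdense ?_
    have h1 : D * D * (N * N) = E * E := by
      rw [← hDN, hcommDN.mul_mul_mul_comm]
    have h2 : E * E = R - R * R := ContinuousLinearMap.ext hEE
    rw [add_mul, hNN] at *
    rw [h1, h2, one_mul, sub_add_cancel]
  · intro M hM
    obtain ⟨h1, h2⟩ := hcommR M hM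
    refine eq_of_mul_eq_of_denseRange hNdense ?_
    rw [mul_assoc, hDN, h2.eq, mul_assoc, (hcommN M h1).eq, ← mul_assoc, hDN]

/-- Continuous real functions with finite limits at `±∞`. -/
structure ContinuousAtEnds (g : ℝ → ℝ) : Prop where
  continuous : Continuous g
  tendsto_atBot : ∃ a, Tendsto g atBot (𝓝 a)
  tendsto_atTop : ∃ b, Tendsto g atTop (𝓝 b)

namespace ContinuousAtEnds

theorem const (c : ℝ) : ContinuousAtEnds fun _ => c :=
  ⟨continuous_const, ⟨c, tendsto_const_nhds⟩, ⟨c, tendsto_const_nhds⟩⟩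

theorem add {f g : ℝ → ℝ} (hf : ContinuousAtEnds f) (hg : ContinuousAtEnds g) :
    ContinuousAtEnds fun x => f x + g x :=
  let ⟨_, ha⟩ := hf.2; let ⟨_, hb⟩ := hf.3; let ⟨_, hc⟩ := hg.2; let ⟨_, hd⟩ := hg.3
  ⟨hf.1.add hg.1, ⟨_, ha.add hc⟩, ⟨_, hb.add hd⟩⟩

theorem mul {f g : ℝ → ℝ} (hf : ContinuousAtEnds f) (hg : ContinuousAtEnds g) :
    ContinuousAtEnds fun x => f x * g x :=
  let ⟨_, ha⟩ := hf.2; let ⟨_, hb⟩ := hf.3; let ⟨_, hc⟩ := hg.2; let ⟨_, hd⟩ := hg.3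
  ⟨hf.1.mul hg.1, ⟨_, ha.mul hc⟩, ⟨_, hb.mul hd⟩⟩

theorem const_mul {g : ℝ → ℝ} (c : ℝ) (hg : ContinuousAtEnds g) :
    ContinuousAtEnds fun x => c * g x := (const c).mul hg

theorem sub {f g : ℝ → ℝ} (hf : ContinuousAtEnds f) (hg : ContinuousAtEnds g) :
    ContinuousAtEnds fun x => f x - g x := by
  simpa [sub_eq_add_neg] using hf.add (hg.const_mul (-1))

theorem sqrt {g : ℝ → ℝ} (hg : ContinuousAtEnds g) : ContinuousAtEnds fun x => √(g x) :=
  let ⟨_, ha⟩ := hg.2; let ⟨_, hb⟩ := hg.3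
  ⟨hg.1.sqrt, ⟨_, ha.sqrt⟩, ⟨_, hb.sqrt⟩⟩

theorem of_abs_mul_le {g : ℝ → ℝ} (hg : Continuous g) {C : ℝ} (hC : ∀ x, |x * g x| ≤ C) :
    ContinuousAtEnds g := by
  have key : ∀ l : Filter ℝ, Tendsto (fun x : ℝ => |x|) l atTop → Tendsto g l (𝓝 0) := by
    intro l hl
    refine squeeze_zero_norm' ?_ (hl.const_div_atTop C)
    filter_upwards [hl.eventually_gt_atTop 0] with x hx
    rw [Real.norm_eq_abs, le_div_iff₀ hx, mul_comm, ← abs_mul]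
    exact hC x
  exact ⟨hg, ⟨0, key _ tendsto_abs_atBot_atTop⟩, ⟨0, key _ tendsto_abs_atTop_atTop⟩⟩

theorem inv_sqrt_one_add_sq : ContinuousAtEnds fun x => (√(1 + x ^ 2))⁻¹ := by
  refine of_abs_mul_le (C := 1) ?_ fun x => ?_
  · exact (by fun_prop : Continuous fun x : ℝ => √(1 + x ^ 2)).inv₀
      fun x => (Real.sqrt_pos.2 (by positivity)).ne'
  · rw [← div_eq_mul_inv, abs_div, abs_of_nonneg (Real.sqrt_nonneg _),
      div_le_one (Real.sqrt_pos.2 (by positivity))]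
    exact Real.abs_le_sqrt (by linarith)

end ContinuousAtEnds

/-- The inverse of the map `x ↦ x / √(1 + x²)` from `ℝ` onto `(-1, 1)`. -/
def lineOfUnit (d : ℝ) : ℝ := d / √(1 - d ^ 2)

/-- The function on `[-1, 1]` corresponding to a function on the extended real line. -/
def unitExtend (g : ℝ → ℝ) : ℝ → ℝ := extendFrom (Ioo (-1) 1) fun d => g (lineOfUnit d)

theorem sqrt_one_sub_sq_pos {d : ℝ} (hd : d ∈ Ioo (-1 : ℝ) 1) : 0 < √(1 - d ^ 2) :=
  Real.sqrt_pos.2 (by nlinarith [hd.1, hd.2])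

theorem continuousOn_lineOfUnit : ContinuousOn lineOfUnit (Ioo (-1) 1) :=
  continuousOn_id.div (by fun_prop) fun _ hd => (sqrt_one_sub_sq_pos hd).ne'

theorem tendsto_lineOfUnit_one : Tendsto lineOfUnit (𝓝[<] 1) atTop := by
  have h : Tendsto (fun d : ℝ => √(1 - d ^ 2)) (𝓝[<] 1) (𝓝[>] 0) := by
    refine tendsto_nhdsWithin_iff.2 ⟨?_, ?_⟩
    · exact tendsto_nhdsWithin_of_tendsto_nhds
        ((by fun_prop : Continuous fun d : ℝ => √(1 - d ^ 2)).tendsto' 1 0 (by simp))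
    · filter_upwards [Ioo_mem_nhdsLT (show (-1 : ℝ) < 1 by norm_num)] with d hd
      exact sqrt_one_sub_sq_pos hd
  exact Tendsto.pos_mul_atTop one_pos (tendsto_nhdsWithin_of_tendsto_nhds tendsto_id)
    h.inv_tendsto_nhdsGT_zero

theorem tendsto_lineOfUnit_neg_one : Tendsto lineOfUnit (𝓝[>] (-1)) atBot := by
  have h1 : Tendsto (fun d : ℝ => -d) (𝓝[>] (-1)) (𝓝[<] 1) := by
    simpa using tendsto_neg_nhdsGT (a := (-1 : ℝ))
  have h := tendsto_neg_atTop_atBot.comp (tendsto_lineOfUnit_one.comp h1)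
  refine h.congr fun d => ?_
  simp [lineOfUnit, neg_div]

theorem unitExtend_of_mem {g : ℝ → ℝ} (hg : ContinuousAtEnds g) {d : ℝ}
    (hd : d ∈ Ioo (-1 : ℝ) 1) : unitExtend g d = g (lineOfUnit d) :=
  extendFrom_extends (hg.continuous.comp_continuousOn continuousOn_lineOfUnit) d hd

theorem continuousOn_unitExtend {g : ℝ → ℝ} (hg : ContinuousAtEnds g) :
    ContinuousOn (unitExtend g) (Icc (-1) 1) :=
  let ⟨_, ha⟩ := hg.2; let ⟨_, hb⟩ := hg.3
  continuousOn_Icc_extendFrom_Ioo (hg.continuous.comp_continuousOn continuousOn_lineOfUnit)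
    (ha.comp tendsto_lineOfUnit_neg_one) (hb.comp tendsto_lineOfUnit_one)

theorem eqOn_Icc_of_eqOn_Ioo {f g : ℝ → ℝ} (hf : ContinuousOn f (Icc (-1) 1))
    (hg : ContinuousOn g (Icc (-1) 1)) (h : ∀ d ∈ Ioo (-1 : ℝ) 1, f d = g d) :
    EqOn f g (Icc (-1) 1) :=
  EqOn.of_subset_closure h hf hg Ioo_subset_Icc_self (closure_Ioo (by norm_num)).ge

theorem abs_unitExtend_le {g : ℝ → ℝ} (hg : ContinuousAtEnds g) {C : ℝ} (hC : ∀ x, |g x| ≤ C)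
    {d : ℝ} (hd : d ∈ Icc (-1 : ℝ) 1) : |unitExtend g d| ≤ C := by
  have h1 : closure (Ioo (-1 : ℝ) 1) = Icc (-1) 1 := closure_Ioo (by norm_num)
  refine le_on_closure (s := Ioo (-1 : ℝ) 1) (f := fun d => |unitExtend g d|) (g := fun _ => C)
    (fun x hx => ?_) (h1 ▸ (continuousOn_unitExtend hg).abs) continuousOn_const (h1 ▸ hd)
  simpa only [unitExtend_of_mem hg hx] using hC _

theorem inv_sqrt_one_add_lineOfUnit_sq {d : ℝ} (hd : d ∈ Ioo (-1 : ℝ) 1) :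
    (√(1 + lineOfUnit d ^ 2))⁻¹ = √(1 - d ^ 2) := by
  have h : 0 < 1 - d ^ 2 := by nlinarith [hd.1, hd.2]
  rw [← Real.sqrt_inv, lineOfUnit, div_pow, Real.sq_sqrt h.le]
  congr 1
  field_simp
  ring

/-- `Φ` is a functional calculus for the operator `A`, defined on continuous functions with
finite limits at `±∞`. -/
structure IsFunctionalCalculus (A : H →ₗ.[ℂ] H) (Φ : (ℝ → ℝ) → H →L[ℂ] H) : Prop where
  map_one : Φ (fun _ => 1) = 1
  map_add : ∀ {f g}, ContinuousAtEnds f → ContinuousAtEnds g →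
    Φ (fun x => f x + g x) = Φ f + Φ g
  map_mul : ∀ {f g}, ContinuousAtEnds f → ContinuousAtEnds g →
    Φ (fun x => f x * g x) = Φ f * Φ g
  map_const_mul : ∀ (c : ℝ) {g}, ContinuousAtEnds g → Φ (fun x => c * g x) = c • Φ g
  norm_le : ∀ {g} {C : ℝ}, ContinuousAtEnds g → (∀ x, |g x| ≤ C) → ‖Φ g‖ ≤ C
  isSelfAdjoint : ∀ g, IsSelfAdjoint (Φ g)
  mem_graph : ∀ {g}, ContinuousAtEnds g → ContinuousAtEnds (fun x => x * g x) →
    ∀ v, (Φ g v, Φ (fun x => x * g x) v) ∈ A.graph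
  commute : ∀ {M : H →L[ℂ] H}, (∀ a b, (a, b) ∈ A.graph → (M a, M b) ∈ A.graph) →
    ∀ g, Commute M (Φ g)
  injective : ∀ {g}, ContinuousAtEnds g → (∀ x, g x ≠ 0) → Function.Injective (Φ g)

theorem IsFunctionalCalculus.map_sub {A : H →ₗ.[ℂ] H} {Φ : (ℝ → ℝ) → H →L[ℂ] H}
    (hΦ : IsFunctionalCalculus A Φ) {f g : ℝ → ℝ} (hf : ContinuousAtEnds f)
    (hg : ContinuousAtEnds g) : Φ (fun x => f x - g x) = Φ f - Φ g := by
  have h := hΦ.map_add hf (hg.const_mul (-1))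
  rw [hΦ.map_const_mul (-1) hg] at h
  simpa [sub_eq_add_neg] using h

theorem exists_isFunctionalCalculus {A : H →ₗ.[ℂ] H} (hA : IsSelfAdjoint A) :
    ∃ Φ : (ℝ → ℝ) → H →L[ℂ] H, IsFunctionalCalculus A Φ := by
  obtain ⟨D, N, hD, hDle, hN, hDN, hcomm, hNinj, hgraph, hM⟩ := exists_bounded_transform hA
  have hspec : spectrum ℝ D ⊆ Icc (-1) 1 := by
    intro d hd
    have h := spectrum.norm_le_norm_mul_of_mem hd
    have h1 : ‖(1 : H →L[ℂ] H)‖ ≤ 1 := ContinuousLinearMap.norm_id_le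
    have h2 : |d| ≤ 1 := h.trans (mul_le_one₀ hDle (norm_nonneg _) h1)
    exact abs_le.1 h2
  have hcont : ∀ {g}, ContinuousAtEnds g → ContinuousOn (unitExtend g) (spectrum ℝ D) :=
    fun hg => (continuousOn_unitExtend hg).mono hspec
  have hcongr : ∀ {f g : ℝ → ℝ}, ContinuousOn f (Icc (-1) 1) → ContinuousOn g (Icc (-1) 1) →
      (∀ d ∈ Ioo (-1 : ℝ) 1, f d = g d) → cfc f D = cfc g D := fun hf hg h =>
    cfc_congr ((eqOn_Icc_of_eqOn_Ioo hf hg h).mono hspec)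
  have hadd : ∀ {f g}, ContinuousAtEnds f → ContinuousAtEnds g →
      cfc (unitExtend fun x => f x + g x) D = cfc (unitExtend f) D + cfc (unitExtend g) D := by
    intro f g hf hg
    rw [← cfc_add _ _ _ (hcont hf) (hcont hg)]
    refine hcongr (continuousOn_unitExtend (hf.add hg))
      ((continuousOn_unitExtend hf).add (continuousOn_unitExtend hg)) fun d hd => ?_
    rw [unitExtend_of_mem (hf.add hg) hd, unitExtend_of_mem hf hd, unitExtend_of_mem hg hd]
  have hmul : ∀ {f g}, ContinuousAtEnds f → ContinuousAtEnds g →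
      cfc (unitExtend fun x => f x * g x) D = cfc (unitExtend f) D * cfc (unitExtend g) D := by
    intro f g hf hg
    rw [← cfc_mul _ _ _ (hcont hf) (hcont hg)]
    refine hcongr (continuousOn_unitExtend (hf.mul hg))
      ((continuousOn_unitExtend hf).mul (continuousOn_unitExtend hg)) fun d hd => ?_
    rw [unitExtend_of_mem (hf.mul hg) hd, unitExtend_of_mem hf hd, unitExtend_of_mem hg hd]
  have hconst : ∀ c : ℝ, cfc (unitExtend fun _ => c) D = c • 1 := by
    intro c
    rw [← Algebra.algebraMap_eq_smul_one, ← cfc_const c D]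
    exact hcongr (continuousOn_unitExtend (.const c)) continuousOn_const fun d hd =>
      unitExtend_of_mem (.const c) hd
  have hnorm : ∀ {g} {C : ℝ}, ContinuousAtEnds g → (∀ x, |g x| ≤ C) →
      ‖cfc (unitExtend g) D‖ ≤ C := fun hg hC =>
    norm_cfc_le ((abs_nonneg _).trans (hC 0)) fun d hd => abs_unitExtend_le hg hC (hspec hd)
  have hNcfc : N = cfc (fun d : ℝ => √(1 - d ^ 2)) D := by
    have h1 : CFC.sqrt (1 - D * D) = N := CFC.sqrt_unique (by rw [← hDN]; abel) hN
    rw [← h1]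
    refine CFC.sqrt_unique ?_ (cfc_nonneg fun _ _ => Real.sqrt_nonneg _)
    rw [← cfc_mul _ _ _, show D * D = cfc (fun d : ℝ => d ^ 2) D by
      rw [cfc_pow_id D 2, pow_two], ← cfc_const_one ℝ D, ← cfc_sub _ _ _]
    refine cfc_congr fun d hd => ?_
    have := hspec hd
    exact Real.mul_self_sqrt (by nlinarith [this.1, this.2])
  have hNext : N = cfc (unitExtend fun x => (√(1 + x ^ 2))⁻¹) D := by
    rw [hNcfc]
    refine hcongr (by fun_prop) (continuousOn_unitExtend .inv_sqrt_one_add_sq) fun d hd => ?_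
    rw [unitExtend_of_mem .inv_sqrt_one_add_sq hd, inv_sqrt_one_add_lineOfUnit_sq hd]
  refine ⟨fun g => cfc (unitExtend g) D, by simpa using hconst 1, hadd, hmul, ?_, hnorm,
    fun g => cfc_predicate _ _, ?_, fun h g => ((hM _ h).symm.cfc_real _).symm, ?_⟩
  · intro c g hg
    rw [hmul (.const c) hg, hconst, smul_mul_assoc, one_mul]
  · intro g hg hg' v
    set G := cfc (unitExtend g) D
    set W := cfc (unitExtend fun x => x * g x) D
    have hNW : N * W = D * G := by
      conv_rhs => rw [← cfc_id' ℝ D]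
      rw [hNcfc, ← cfc_mul _ _ _ (by fun_prop) (hcont hg'),
        ← cfc_mul _ _ _ (by fun_prop) (hcont hg)]
      refine hcongr (.mul (by fun_prop) (continuousOn_unitExtend hg'))
        (.mul (by fun_prop) (continuousOn_unitExtend hg)) fun d hd => ?_
      have h0 := (sqrt_one_sub_sq_pos hd).ne'
      rw [unitExtend_of_mem hg hd, unitExtend_of_mem hg' hd]
      simp only [lineOfUnit]
      field_simp
    have h1 : N * (N * G + D * W) = G := by
      rw [mul_add, ← mul_assoc N D, ← hcomm.eq, mul_assoc D, hNW, ← mul_assoc, ← mul_assoc,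
        ← add_mul, add_comm, hDN, one_mul]
    have h2 : D * (N * G + D * W) = W := by
      rw [mul_add, ← mul_assoc D N, hcomm.eq, mul_assoc N, ← hNW, ← mul_assoc, ← mul_assoc,
        ← add_mul, add_comm, hDN, one_mul]
    have h3 := hgraph ((N * G + D * W) v)
    rwa [show N ((N * G + D * W) v) = G v from DFunLike.congr_fun h1 v,
      show D ((N * G + D * W) v) = W v from DFunLike.congr_fun h2 v] at h3
  · intro g hg hne
    rw [injective_iff_map_eq_zero]
    intro v hv
    refine hNinj ((map_zero N).symm ▸ norm_le_zero_iff.1 (le_of_forall_pos_le_add fun ε hε => ?_))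
    set n : ℝ → ℝ := fun x => (√(1 + x ^ 2))⁻¹
    have hn : ContinuousAtEnds n := .inv_sqrt_one_add_sq
    set δ : ℝ := ε / (‖v‖ + 1)
    have hδ : 0 < δ := by positivity
    set r : ℝ → ℝ := fun x => max 0 (1 - δ * |x|) * n x / g x
    have hr0 : ∀ x, δ⁻¹ ≤ |x| → r x = 0 := by
      intro x hx
      have : 1 - δ * |x| ≤ 0 := by
        rw [inv_le_iff_one_le_mul₀ hδ] at hx
        linarith
      simp [r, max_eq_left this]
    have hr : ContinuousAtEnds r := by
      refine ⟨.div (.mul (by fun_prop) hn.continuous) hg.continuous hne, ⟨0, ?_⟩, ⟨0, ?_⟩⟩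
      · exact tendsto_const_nhds.congr' <| (tendsto_abs_atBot_atTop.eventually_ge_atTop δ⁻¹).mono
          fun x hx => (hr0 x hx).symm
      · exact tendsto_const_nhds.congr' <| (tendsto_abs_atTop_atTop.eventually_ge_atTop δ⁻¹).mono
          fun x hx => (hr0 x hx).symm
    have hs := hn.add ((hr.mul hg).const_mul (-1))
    have hsplit : N = cfc (unitExtend fun x => n x + -1 * (r x * g x)) D +
        cfc (unitExtend r) D * cfc (unitExtend g) D := by
      rw [← hmul hr hg, ← hadd hs (hr.mul hg), hNext]
      congr 2
      funext x
      ring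
    have hsmall : ∀ x, |n x + -1 * (r x * g x)| ≤ δ := by
      intro x
      have hpos : 0 < √(1 + x ^ 2) := Real.sqrt_pos.2 (by positivity)
      have hn0 : 0 ≤ n x := inv_nonneg.2 hpos.le
      have hn1 : |x| * n x ≤ 1 := by
        rw [← div_eq_mul_inv, div_le_one hpos]
        exact Real.abs_le_sqrt (by linarith)
      have e : n x + -1 * (r x * g x) = (1 - max 0 (1 - δ * |x|)) * n x := by
        simp only [r]
        rw [div_mul_cancel₀ _ (hne x)]
        ring
      have h1 : 0 ≤ 1 - max 0 (1 - δ * |x|) :=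
        sub_nonneg.2 (max_le zero_le_one (by nlinarith [abs_nonneg x]))
      have h2 : 1 - max 0 (1 - δ * |x|) ≤ δ * |x| := by
        linarith [le_max_right 0 (1 - δ * |x|)]
      rw [e, abs_of_nonneg (mul_nonneg h1 hn0)]
      calc _ ≤ δ * |x| * n x := mul_le_mul_of_nonneg_right h2 hn0
        _ = δ * (|x| * n x) := by ring
        _ ≤ δ := mul_le_of_le_one_right hδ.le hn1
    have hNv : N v = cfc (unitExtend fun x => n x + -1 * (r x * g x)) D v := by
      conv_lhs => rw [hsplit]
      simp [hv]
    calc ‖N v‖ ≤ δ * ‖v‖ := hNv ▸ ContinuousLinearMap.le_of_opNorm_le _ (hnorm hs hsmall) v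
      _ ≤ 0 + ε := by
        rw [zero_add, div_mul_eq_mul_div, div_le_iff₀ (by positivity)]
        nlinarith [norm_nonneg v]

theorem abs_exp_neg_sub_one_le (u : ℝ) : |Real.exp (-u) - 1| ≤ |u| * (1 + Real.exp (-u)) := by
  have h1 := Real.add_one_le_exp (-u)
  have h2 := Real.add_one_le_exp u
  have h3 : Real.exp u * Real.exp (-u) = 1 := by rw [← Real.exp_add]; simp
  have h4 := Real.exp_pos (-u)
  have h5 : (u + 1) * Real.exp (-u) ≤ 1 :=
    (mul_le_mul_of_nonneg_right h2 h4.le).trans_eq h3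
  rcases abs_cases u with ⟨h, h'⟩ | ⟨h, h'⟩ <;> rw [h, abs_le] <;> constructor <;> nlinarith

theorem abs_exp_neg_sub_one_add_le (u : ℝ) :
    |Real.exp (-u) - 1 + u| ≤ u ^ 2 * (1 + Real.exp (-u)) := by
  have h1 := Real.add_one_le_exp (-u)
  have h2 := Real.add_one_le_exp u
  have h3 : Real.exp u * Real.exp (-u) = 1 := by rw [← Real.exp_add]; simp
  have h4 := Real.exp_pos (-u)
  have h5 : (u + 1) * Real.exp (-u) ≤ 1 :=
    (mul_le_mul_of_nonneg_right h2 h4.le).trans_eq h3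
  rw [abs_of_nonneg (by linarith)]
  have h6 : Real.exp (-u) - 1 + u ≤ -u * (Real.exp (-u) - 1) := by linarith
  refine h6.trans ((le_abs_self _).trans ?_)
  rw [abs_mul, abs_neg, ← sq_abs, sq, mul_assoc]
  exact mul_le_mul_of_nonneg_left (abs_exp_neg_sub_one_le u) (abs_nonneg u)

theorem mul_exp_neg_le {m : ℝ} (hm : 0 < m) (y : ℝ) : y * Real.exp (-(m * y)) ≤ m⁻¹ := by
  have h1 := Real.add_one_le_exp (m * y)
  rw [Real.exp_neg, ← div_eq_mul_inv, div_le_iff₀ (Real.exp_pos _)]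
  calc y = m⁻¹ * (m * y) := by field_simp
    _ ≤ _ := mul_le_mul_of_nonneg_left (by linarith) (by positivity)

section ExponentialFamily

variable {A : H →ₗ.[ℂ] H} {Φ : (ℝ → ℝ) → H →L[ℂ] H} {w : ℝ → ℝ} {a b C : ℝ}

theorem continuousAtEnds_of_sq_mul_le {g : ℝ → ℝ} (hg : Continuous g) (h0 : ∀ x, 0 ≤ g x)
    (h1 : ∀ x, g x ≤ C) (h2 : ∀ x, x ^ 2 * g x ≤ C) :
    ContinuousAtEnds g ∧ ContinuousAtEnds fun x => x * g x := by
  constructor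
  · refine .of_abs_mul_le (C := 2 * C) hg fun x => ?_
    rw [abs_mul, abs_of_nonneg (h0 x)]
    have : |x| ≤ 1 + x ^ 2 := by nlinarith [sq_abs x, sq_nonneg (|x| - 1), abs_nonneg x]
    nlinarith [h0 x, h1 x, h2 x]
  · refine .of_abs_mul_le (C := C) (by fun_prop) fun x => ?_
    rw [← mul_assoc, ← sq, abs_of_nonneg (mul_nonneg (sq_nonneg x) (h0 x))]
    exact h2 x

theorem hasDerivAt_expFamily (hΦ : IsFunctionalCalculus A Φ) (hw : Continuous w)
    (hw0 : ∀ x, 0 ≤ w x) (h1 : ∀ t ∈ Ioo a b, ∀ x, Real.exp (-(t * x)) * w x ≤ C)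
    (h2 : ∀ t ∈ Ioo a b, ∀ x, x ^ 2 * (Real.exp (-(t * x)) * w x) ≤ C) {t : ℝ}
    (ht : t ∈ Ioo a b) :
    HasDerivAt (fun t => Φ fun x => Real.exp (-(t * x)) * w x)
      (-Φ fun x => x * (Real.exp (-(t * x)) * w x)) t := by
  have hE : ∀ s ∈ Ioo a b, _ := fun s hs =>
    continuousAtEnds_of_sq_mul_le (g := fun x => Real.exp (-(s * x)) * w x) (by fun_prop)
      (fun x => mul_nonneg (Real.exp_pos _).le (hw0 x)) (h1 s hs) (h2 s hs)
  rw [hasDerivAt_iff_isLittleO]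
  refine Asymptotics.IsBigO.trans_isLittleO (g := fun s => (s - t) ^ 2) ?_ ?_
  · refine Asymptotics.IsBigO.of_bound (2 * C) ?_
    filter_upwards [isOpen_Ioo.mem_nhds ht] with s hs
    rw [smul_neg, sub_neg_eq_add, ← hΦ.map_sub (hE s hs).1 (hE t ht).1,
      ← hΦ.map_const_mul _ (hE t ht).2,
      ← hΦ.map_add ((hE s hs).1.sub (hE t ht).1) ((hE t ht).2.const_mul _)]
    refine hΦ.norm_le (((hE s hs).1.sub (hE t ht).1).add ((hE t ht).2.const_mul _)) fun x => ?_
    have e : Real.exp (-(s * x)) = Real.exp (-(t * x)) * Real.exp (-((s - t) * x)) := by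
      rw [← Real.exp_add]; congr 1; ring
    have e2 : Real.exp (-(s * x)) * w x - Real.exp (-(t * x)) * w x +
        (s - t) * (x * (Real.exp (-(t * x)) * w x)) = Real.exp (-(t * x)) * w x *
        (Real.exp (-((s - t) * x)) - 1 + (s - t) * x) := by rw [e]; ring
    have hp : 0 ≤ Real.exp (-(t * x)) * w x := mul_nonneg (Real.exp_pos _).le (hw0 x)
    rw [e2, abs_mul, abs_of_nonneg hp, Real.norm_eq_abs, abs_of_nonneg (sq_nonneg (s - t))]
    calc _ ≤ _ := mul_le_mul_of_nonneg_left (abs_exp_neg_sub_one_add_le _) hp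
      _ = (s - t) ^ 2 * (x ^ 2 * (Real.exp (-(t * x)) * w x) +
          x ^ 2 * (Real.exp (-(s * x)) * w x)) := by rw [e]; ring
      _ ≤ (s - t) ^ 2 * (C + C) :=
        mul_le_mul_of_nonneg_left (add_le_add (h2 t ht x) (h2 s hs x)) (sq_nonneg _)
      _ = _ := by ring
  · simpa using Asymptotics.isLittleO_pow_sub_sub t one_lt_two

theorem continuousOn_expFamily (hΦ : IsFunctionalCalculus A Φ) (hw : Continuous w)
    (hw0 : ∀ x, 0 ≤ w x) (h1 : ∀ t ∈ Ioo a b, ∀ x, Real.exp (-(t * x)) * w x ≤ C)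
    (h2 : ∀ t ∈ Ioo a b, ∀ x, x ^ 2 * (Real.exp (-(t * x)) * w x) ≤ C) :
    ContinuousOn (fun t => Φ fun x => x * (Real.exp (-(t * x)) * w x)) (Ioo a b) := by
  have hE : ∀ s ∈ Ioo a b, _ := fun s hs =>
    continuousAtEnds_of_sq_mul_le (g := fun x => Real.exp (-(s * x)) * w x) (by fun_prop)
      (fun x => mul_nonneg (Real.exp_pos _).le (hw0 x)) (h1 s hs) (h2 s hs)
  rcases (Ioo a b).eq_empty_or_nonempty with he | ⟨c, hc⟩
  · simp [he]
  have hC : 0 ≤ C := by simpa using h2 c hc 0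
  refine LipschitzOnWith.continuousOn (K := ⟨2 * C, by positivity⟩)
    (LipschitzOnWith.of_dist_le_mul fun s hs t ht => ?_)
  rw [dist_eq_norm, ← hΦ.map_sub (hE s hs).2 (hE t ht).2]
  refine hΦ.norm_le ((hE s hs).2.sub (hE t ht).2) fun x => ?_
  have e : Real.exp (-(s * x)) = Real.exp (-(t * x)) * Real.exp (-((s - t) * x)) := by
    rw [← Real.exp_add]; congr 1; ring
  have e2 : x * (Real.exp (-(s * x)) * w x) - x * (Real.exp (-(t * x)) * w x) =
      Real.exp (-(t * x)) * w x * (x * (Real.exp (-((s - t) * x)) - 1)) := by rw [e]; ring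
  have hp : 0 ≤ Real.exp (-(t * x)) * w x := mul_nonneg (Real.exp_pos _).le (hw0 x)
  rw [e2, abs_mul, abs_of_nonneg hp, abs_mul, Real.dist_eq]
  calc _ ≤ Real.exp (-(t * x)) * w x *
        (|x| * (|(s - t) * x| * (1 + Real.exp (-((s - t) * x))))) := by
        gcongr
        exact abs_exp_neg_sub_one_le _
    _ = |s - t| * (x ^ 2 * (Real.exp (-(t * x)) * w x) +
        x ^ 2 * (Real.exp (-(s * x)) * w x)) := by rw [e, abs_mul, ← sq_abs x]; ring
    _ ≤ |s - t| * (C + C) :=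
      mul_le_mul_of_nonneg_left (add_le_add (h2 t ht x) (h2 s hs x)) (abs_nonneg _)
    _ = 2 * C * |s - t| := by ring

end ExponentialFamily

/-- The function `x ↦ exp (-t x) / (1 + exp (-τ x))`. -/
def fermi (τ t x : ℝ) : ℝ := Real.exp (-(t * x)) * (1 + Real.exp (-(τ * x)))⁻¹

section Fermi

variable {τ t : ℝ}

theorem one_add_exp_pos (y : ℝ) : 0 < 1 + Real.exp y := by positivity

theorem continuous_inv_one_add_exp : Continuous fun x : ℝ => (1 + Real.exp (-(τ * x)))⁻¹ :=
  Continuous.inv₀ (by fun_prop) fun _ => (one_add_exp_pos _).ne'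

theorem continuous_fermi : Continuous (fermi τ t) :=
  Continuous.mul (by fun_prop) continuous_inv_one_add_exp

theorem fermi_pos (x : ℝ) : 0 < fermi τ t x := by unfold fermi; positivity

theorem fermi_le {m : ℝ} (hm : m ≤ t) (ht : t ≤ τ - m) (x : ℝ) :
    fermi τ t x ≤ Real.exp (-(m * |x|)) := by
  rw [fermi, ← div_eq_mul_inv, div_le_iff₀ (one_add_exp_pos _), mul_add, mul_one,
    ← Real.exp_add]
  rcases abs_cases x with ⟨h, h'⟩ | ⟨h, h'⟩ <;> rw [h]
  · have : Real.exp (-(t * x)) ≤ Real.exp (-(m * x)) := Real.exp_le_exp.2 (by nlinarith)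
    linarith [Real.exp_pos (-(m * x) + -(τ * x))]
  · have : Real.exp (-(t * x)) ≤ Real.exp (-(m * -x) + -(τ * x)) :=
      Real.exp_le_exp.2 (by nlinarith)
    linarith [Real.exp_pos (-(m * -x))]

theorem fermi_le_one (ht : t ∈ Icc 0 τ) (x : ℝ) : fermi τ t x ≤ 1 := by
  simpa using fermi_le ht.1 (by simpa using ht.2) x

theorem abs_mul_fermi_le {m : ℝ} (hm : 0 < m) (hmt : m ≤ t) (ht : t ≤ τ - m) (x : ℝ) :
    |x * fermi τ t x| ≤ m⁻¹ := by
  rw [abs_mul, abs_of_pos (fermi_pos x)]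
  exact (mul_le_mul_of_nonneg_left (fermi_le hmt ht x) (abs_nonneg x)).trans (mul_exp_neg_le hm _)

theorem sq_mul_fermi_le {m : ℝ} (hm : 0 < m) (hmt : m ≤ t) (ht : t ≤ τ - m) (x : ℝ) :
    x ^ 2 * fermi τ t x ≤ 4 / m ^ 2 := by
  have h := mul_exp_neg_le (half_pos hm) |x|
  calc x ^ 2 * fermi τ t x ≤ x ^ 2 * Real.exp (-(m * |x|)) :=
        mul_le_mul_of_nonneg_left (fermi_le hmt ht x) (sq_nonneg x)
    _ = (|x| * Real.exp (-(m / 2 * |x|))) ^ 2 := by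
      rw [mul_pow, sq_abs, ← Real.exp_nat_mul]; congr 2; push_cast; ring
    _ ≤ ((m / 2)⁻¹) ^ 2 := by gcongr
    _ = 4 / m ^ 2 := by field_simp; norm_num

theorem continuousAtEnds_fermi_of_mem_Ioo (ht : t ∈ Ioo 0 τ) :
    ContinuousAtEnds (fermi τ t) ∧ ContinuousAtEnds fun x => x * fermi τ t x := by
  have hm : 0 < min t (τ - t) := lt_min ht.1 (sub_pos.2 ht.2)
  have h2 : t ≤ τ - min t (τ - t) := by linarith [min_le_right t (τ - t)]
  refine continuousAtEnds_of_sq_mul_le (C := max 1 (4 / min t (τ - t) ^ 2)) continuous_fermi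
    (fun x => (fermi_pos x).le) (fun x => ?_) fun x => ?_
  · exact (fermi_le_one (Ioo_subset_Icc_self ht) x).trans (le_max_left _ _)
  · exact (sq_mul_fermi_le hm (min_le_left _ _) h2 x).trans (le_max_right _ _)

theorem fermi_zero_add_fermi_self (x : ℝ) : fermi τ 0 x + fermi τ τ x = 1 := by
  simp only [fermi, zero_mul, neg_zero, Real.exp_zero, ← add_mul]
  exact mul_inv_cancel₀ (one_add_exp_pos _).ne'

theorem continuousAtEnds_fermi_zero (hτ : 0 < τ) : ContinuousAtEnds (fermi τ 0) := by
  have e : fermi τ 0 = fun x => (1 + Real.exp (-(τ * x)))⁻¹ := by funext x; simp [fermi]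
  refine ⟨continuous_fermi, ⟨0, ?_⟩, ⟨1, ?_⟩⟩ <;> rw [e]
  · have h : Tendsto (fun x : ℝ => -(τ * x)) atBot atTop :=
      tendsto_neg_atBot_atTop.comp (tendsto_id.const_mul_atBot hτ)
    exact (tendsto_atTop_add_const_left _ 1 (Real.tendsto_exp_atTop.comp h)).inv_tendsto_atTop
  · have h : Tendsto (fun x : ℝ => -(τ * x)) atTop atBot :=
      tendsto_neg_atTop_atBot.comp (tendsto_id.const_mul_atTop hτ)
    simpa using ((Real.tendsto_exp_atBot.comp h).const_add 1).inv₀ (by norm_num)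

theorem continuousAtEnds_fermi (hτ : 0 < τ) (ht : t ∈ Icc 0 τ) : ContinuousAtEnds (fermi τ t) := by
  rcases ht.1.eq_or_lt with rfl | h0
  · exact continuousAtEnds_fermi_zero hτ
  rcases ht.2.eq_or_lt with rfl | h1
  · have e : fermi t t = fun x => 1 - fermi t 0 x :=
      funext fun x => eq_sub_of_add_eq' (fermi_zero_add_fermi_self x)
    rw [e]
    exact (ContinuousAtEnds.const 1).sub (continuousAtEnds_fermi_zero hτ)
  · exact (continuousAtEnds_fermi_of_mem_Ioo ⟨h0, h1⟩).1

variable {A : H →ₗ.[ℂ] H} {Φ : (ℝ → ℝ) → H →L[ℂ] H}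

theorem norm_fermi_le (hΦ : IsFunctionalCalculus A Φ) (hτ : 0 < τ) (ht : t ∈ Icc 0 τ) :
    ‖Φ (fermi τ t)‖ ≤ 1 :=
  hΦ.norm_le (continuousAtEnds_fermi hτ ht) fun x =>
    (abs_of_pos (fermi_pos x)).trans_le (fermi_le_one ht x)

theorem norm_mul_fermi_le (hΦ : IsFunctionalCalculus A Φ) (ht : t ∈ Ioo 0 τ) :
    ‖Φ fun x => x * fermi τ t x‖ ≤ t⁻¹ + (τ - t)⁻¹ := by
  refine hΦ.norm_le (continuousAtEnds_fermi_of_mem_Ioo ht).2 fun x => ?_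
  have h1 : 0 < t := ht.1
  have h2 : 0 < τ - t := sub_pos.2 ht.2
  have i1 := inv_pos.2 h1
  have i2 := inv_pos.2 h2
  rcases le_total t (τ - t) with h | h
  · exact (abs_mul_fermi_le h1 le_rfl (by linarith) x).trans (by linarith)
  · exact (abs_mul_fermi_le h2 h (by linarith) x).trans (by linarith)

theorem hasDerivAt_fermi (hΦ : IsFunctionalCalculus A Φ) (ht : t ∈ Ioo 0 τ) :
    HasDerivAt (fun t => Φ (fermi τ t)) (-Φ fun x => x * fermi τ t x) t := by
  obtain ⟨m, hm, hmt⟩ := exists_between (lt_min ht.1 (sub_pos.2 ht.2))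
  obtain ⟨hmt, hmt'⟩ := lt_min_iff.1 hmt
  refine hasDerivAt_expFamily (a := m) (b := τ - m) (C := max 1 (4 / m ^ 2)) hΦ
    continuous_inv_one_add_exp (fun x => (inv_pos.2 (one_add_exp_pos _)).le) (fun s hs x => ?_)
    (fun s hs x => ?_) ⟨hmt, by linarith⟩
  · exact (fermi_le_one ⟨hm.le.trans hs.1.le, by linarith [hs.2]⟩ x).trans (le_max_left _ _)
  · exact (sq_mul_fermi_le hm hs.1.le hs.2.le x).trans (le_max_right _ _)

theorem continuousOn_mul_fermi (hΦ : IsFunctionalCalculus A Φ) :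
    ContinuousOn (fun t => Φ fun x => x * fermi τ t x) (Ioo 0 τ) := by
  intro t ht
  obtain ⟨m, hm, hmt⟩ := exists_between (lt_min ht.1 (sub_pos.2 ht.2))
  obtain ⟨hmt, hmt'⟩ := lt_min_iff.1 hmt
  refine ContinuousAt.continuousWithinAt (ContinuousOn.continuousAt (s := Ioo m (τ - m)) ?_
    (isOpen_Ioo.mem_nhds ⟨hmt, by linarith⟩))
  refine continuousOn_expFamily (a := m) (b := τ - m) (C := max 1 (4 / m ^ 2)) hΦ
    continuous_inv_one_add_exp (fun x => (inv_pos.2 (one_add_exp_pos _)).le) (fun s hs x => ?_)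
    (fun s hs x => ?_)
  · exact (fermi_le_one ⟨hm.le.trans hs.1.le, by linarith [hs.2]⟩ x).trans (le_max_left _ _)
  · exact (sq_mul_fermi_le hm hs.1.le hs.2.le x).trans (le_max_right _ _)

theorem fermi_zero_add_fermi_self_map (hΦ : IsFunctionalCalculus A Φ) (hτ : 0 < τ) :
    Φ (fermi τ 0) + Φ (fermi τ τ) = 1 := by
  rw [← hΦ.map_add (continuousAtEnds_fermi hτ ⟨le_rfl, hτ.le⟩)
    (continuousAtEnds_fermi hτ ⟨hτ.le, le_rfl⟩), ← hΦ.map_one]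
  exact congrArg Φ (funext fermi_zero_add_fermi_self)

theorem lipschitz_fermi_mul (hΦ : IsFunctionalCalculus A Φ) (hτ : 0 < τ) {s : ℝ}
    (hs : s ∈ Icc 0 τ) (ht : t ∈ Icc 0 τ) :
    ‖(Φ (fermi τ s) - Φ (fermi τ t)) * Φ (fun x => (√(1 + x ^ 2))⁻¹)‖ ≤ 2 * |s - t| := by
  have hs' := continuousAtEnds_fermi hτ hs
  have ht' := continuousAtEnds_fermi hτ ht
  rw [← hΦ.map_sub hs' ht', ← hΦ.map_mul (hs'.sub ht') .inv_sqrt_one_add_sq]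
  refine hΦ.norm_le ((hs'.sub ht').mul .inv_sqrt_one_add_sq) fun x => ?_
  have hpos : 0 < √(1 + x ^ 2) := Real.sqrt_pos.2 (by positivity)
  have hn1 : |x| * (√(1 + x ^ 2))⁻¹ ≤ 1 := by
    rw [← div_eq_mul_inv, div_le_one hpos]
    exact Real.abs_le_sqrt (by linarith)
  have e : fermi τ s x = fermi τ t x * Real.exp (-((s - t) * x)) := by
    rw [fermi, fermi, mul_right_comm, ← Real.exp_add]; congr 2; ring
  have e2 : fermi τ s x - fermi τ t x = fermi τ t x * (Real.exp (-((s - t) * x)) - 1) := by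
    rw [e]; ring
  rw [abs_mul, abs_of_pos (inv_pos.2 hpos), e2, abs_mul, abs_of_pos (fermi_pos x)]
  calc _ ≤ fermi τ t x * (|(s - t) * x| * (1 + Real.exp (-((s - t) * x)))) *
        (√(1 + x ^ 2))⁻¹ := by
        have := (fermi_pos (τ := τ) (t := t) x).le
        gcongr
        exact abs_exp_neg_sub_one_le _
    _ = (fermi τ t x + fermi τ s x) * |s - t| * (|x| * (√(1 + x ^ 2))⁻¹) := by
      rw [e, abs_mul]; ring
    _ ≤ (1 + 1) * |s - t| * 1 := by
      gcongr
      · exact fermi_le_one ht x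
      · exact fermi_le_one hs x
    _ = _ := by ring

theorem continuousOn_fermi_apply (hΦ : IsFunctionalCalculus A Φ) (hτ : 0 < τ) (v : H) :
    ContinuousOn (fun t => Φ (fermi τ t) v) (Icc 0 τ) := by
  set N := Φ fun x => (√(1 + x ^ 2))⁻¹
  have hN : DenseRange N := denseRange_of_selfAdjoint_injective (hΦ.isSelfAdjoint _)
    (hΦ.injective .inv_sqrt_one_add_sq fun x =>
      inv_ne_zero (Real.sqrt_pos.2 (by positivity)).ne')
  intro t ht
  rw [ContinuousWithinAt, Metric.tendsto_nhds]
  intro ε hε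
  obtain ⟨w, hw⟩ := hN.exists_dist_lt v (show 0 < ε / 4 by positivity)
  have hev : ∀ᶠ s in 𝓝[Icc 0 τ] t, 2 * |s - t| * ‖w‖ < ε / 4 := by
    have : Tendsto (fun s => 2 * |s - t| * ‖w‖) (𝓝[Icc 0 τ] t) (𝓝 0) :=
      tendsto_nhdsWithin_of_tendsto_nhds (Continuous.tendsto' (by fun_prop) _ _ (by simp))
    exact this.eventually_lt_const (by positivity)
  filter_upwards [hev, self_mem_nhdsWithin] with s hs hsI
  have h1 : ‖Φ (fermi τ s) (v - N w)‖ ≤ ‖v - N w‖ := by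
    simpa using ContinuousLinearMap.le_of_opNorm_le _ (norm_fermi_le hΦ hτ hsI) (v - N w)
  have h2 : ‖Φ (fermi τ t) (v - N w)‖ ≤ ‖v - N w‖ := by
    simpa using ContinuousLinearMap.le_of_opNorm_le _ (norm_fermi_le hΦ hτ ht) (v - N w)
  have h3 : ‖Φ (fermi τ s) (N w) - Φ (fermi τ t) (N w)‖ ≤ 2 * |s - t| * ‖w‖ :=
    ContinuousLinearMap.le_of_opNorm_le _ (lipschitz_fermi_mul hΦ hτ hsI ht) w
  rw [dist_eq_norm] at hw ⊢
  have e : Φ (fermi τ s) v - Φ (fermi τ t) v = Φ (fermi τ s) (v - N w) +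
      (Φ (fermi τ s) (N w) - Φ (fermi τ t) (N w)) - Φ (fermi τ t) (v - N w) := by
    simp only [map_sub]; abel
  rw [e]
  have := norm_sub_le (Φ (fermi τ s) (v - N w) +
      (Φ (fermi τ s) (N w) - Φ (fermi τ t) (N w))) (Φ (fermi τ t) (v - N w))
  have := norm_add_le (Φ (fermi τ s) (v - N w)) (Φ (fermi τ s) (N w) - Φ (fermi τ t) (N w))
  linarith

end Fermi

section Gaussian

variable {A : H →ₗ.[ℂ] H} {Φ : (ℝ → ℝ) → H →L[ℂ] H}

/-- The function `x ↦ exp (-t x - x² / 2)`. -/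
def gaussianExp (t x : ℝ) : ℝ := Real.exp (-(t * x)) * Real.exp (-(x ^ 2 / 2))

theorem gaussianExp_bounds {T t : ℝ} (ht : t ∈ Ioo (-T) T) (x : ℝ) :
    gaussianExp t x ≤ 4 * Real.exp (T ^ 2) ∧ x ^ 2 * gaussianExp t x ≤ 4 * Real.exp (T ^ 2) := by
  have htT : t ^ 2 ≤ T ^ 2 := sq_le_sq' ht.1.le ht.2.le
  have h1 : gaussianExp t x ≤ Real.exp (T ^ 2) * Real.exp (-(1 / 4 * x ^ 2)) := by
    rw [gaussianExp, ← Real.exp_add, ← Real.exp_add]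
    exact Real.exp_le_exp.2 (by nlinarith [sq_nonneg (t + x / 2)])
  have hT := Real.exp_pos (T ^ 2)
  constructor
  · have : Real.exp (-(1 / 4 * x ^ 2)) ≤ 1 := Real.exp_le_one_iff.2 (by nlinarith [sq_nonneg x])
    nlinarith
  · calc _ ≤ x ^ 2 * (Real.exp (T ^ 2) * Real.exp (-(1 / 4 * x ^ 2))) := by gcongr
      _ = Real.exp (T ^ 2) * (x ^ 2 * Real.exp (-(1 / 4 * x ^ 2))) := by ring
      _ ≤ Real.exp (T ^ 2) * (1 / 4)⁻¹ := by gcongr; exact mul_exp_neg_le (by norm_num) _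
      _ = _ := by norm_num; ring

theorem mem_Ioo_abs_add_one (t : ℝ) : t ∈ Ioo (-(|t| + 1)) (|t| + 1) :=
  abs_lt.1 (lt_add_one _)

theorem continuousAtEnds_gaussianExp (t : ℝ) :
    ContinuousAtEnds (gaussianExp t) ∧ ContinuousAtEnds fun x => x * gaussianExp t x :=
  continuousAtEnds_of_sq_mul_le (by unfold gaussianExp; fun_prop)
    (fun x => by unfold gaussianExp; positivity)
    (fun x => (gaussianExp_bounds (mem_Ioo_abs_add_one t) x).1)
    fun x => (gaussianExp_bounds (mem_Ioo_abs_add_one t) x).2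

theorem hasDerivAt_gaussianExp (hΦ : IsFunctionalCalculus A Φ) (t : ℝ) :
    HasDerivAt (fun t => Φ (gaussianExp t)) (-Φ fun x => x * gaussianExp t x) t :=
  hasDerivAt_expFamily hΦ (by fun_prop) (fun x => (Real.exp_pos _).le)
    (fun _ hs x => (gaussianExp_bounds hs x).1) (fun _ hs x => (gaussianExp_bounds hs x).2)
    (mem_Ioo_abs_add_one t)

theorem gaussianExp_zero_injective (hΦ : IsFunctionalCalculus A Φ) :
    Function.Injective (Φ (gaussianExp 0) * Φ (gaussianExp 0)) := by
  have h := hΦ.injective (continuousAtEnds_gaussianExp 0).1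
    fun x => (mul_pos (Real.exp_pos _) (Real.exp_pos _)).ne'
  exact h.comp h

theorem gaussianExp_mul_neg (hΦ : IsFunctionalCalculus A Φ) (t : ℝ) :
    Φ (gaussianExp t) * Φ (gaussianExp (-t)) = Φ (gaussianExp 0) * Φ (gaussianExp 0) := by
  have h := fun s => (continuousAtEnds_gaussianExp s).1
  rw [← hΦ.map_mul (h _) (h _), ← hΦ.map_mul (h _) (h _)]
  congr 1
  funext x
  simp only [gaussianExp, ← Real.exp_add]
  congr 1
  ring

theorem gaussianExp_mul_fermi (hΦ : IsFunctionalCalculus A Φ) {τ r r' x s : ℝ} (hτ : 0 < τ)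
    (hr : r ∈ Icc 0 τ) (hr' : r' ∈ Icc 0 τ) (h : r = x - s + r') :
    Φ (gaussianExp 0) * Φ (gaussianExp 0) * Φ (fermi τ r) =
      Φ (gaussianExp x) * (Φ (gaussianExp (-s)) * Φ (fermi τ r')) := by
  have hg := fun s => (continuousAtEnds_gaussianExp s).1
  have hf := continuousAtEnds_fermi hτ hr
  have hf' := continuousAtEnds_fermi hτ hr'
  rw [← hΦ.map_mul (hg _) (hg _), ← hΦ.map_mul ((hg _).mul (hg _)) hf,
    ← hΦ.map_mul (hg _) hf', ← hΦ.map_mul (hg _) ((hg _).mul hf')]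
  congr 1
  funext y
  simp only [gaussianExp, fermi, ← mul_assoc, ← Real.exp_add]
  congr 2
  rw [h]
  ring

end Gaussian

section ParticularSolution

open MeasureTheory

theorem HasDerivAt.complex_clm_apply {V : ℝ → H →L[ℂ] H} {V' : H →L[ℂ] H} {u : ℝ → H} {u' : H}
    {x : ℝ} (hV : HasDerivAt V V' x) (hu : HasDerivAt u u' x) :
    HasDerivAt (fun x => V x (u x)) (V' (u x) + V x u') x :=
  ((ContinuousLinearMap.restrictScalarsL ℂ H H ℝ ℝ).hasFDerivAt.comp_hasDerivAt x hV).clm_apply hu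

theorem hasDerivAt_of_injective_comp {K : H →L[ℂ] H} (hK : Function.Injective K) {a b : ℝ}
    {ψ v : ℝ → H} (hv : ContinuousOn v (Ioo a b))
    (h : ∀ x ∈ Ioo a b, HasDerivAt (fun x => K (ψ x)) (K (v x)) x) {x : ℝ} (hx : x ∈ Ioo a b) :
    HasDerivAt ψ (v x) x := by
  set Θ : ℝ → H := fun y => ψ x + ∫ r in x..y, v r with hΘ
  have hΘ' : ∀ y ∈ Ioo a b, HasDerivAt Θ (v y) y := fun y hy =>
    (intervalIntegral.integral_hasDerivAt_right
      ((hv.mono (ordConnected_Ioo.uIcc_subset hx hy)).intervalIntegrable)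
      (hv.stronglyMeasurableAtFilter isOpen_Ioo y hy)
      (hv.continuousAt (isOpen_Ioo.mem_nhds hy))).const_add _
  have hd : ∀ y ∈ Ioo a b, HasDerivAt (fun y => K (Θ y) - K (ψ y)) 0 y := fun y hy => by
    simpa using ((hasDerivAt_const y K).complex_clm_apply (hΘ' y hy)).fun_sub (h y hy)
  have hconst : ∀ y ∈ Ioo a b, ψ y = Θ y := fun y hy => by
    have := isOpen_Ioo.is_const_of_deriv_eq_zero (isPreconnected_Ioo (a := a) (b := b))
      (fun z hz => (hd z hz).differentiableAt.differentiableWithinAt)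
      (fun z hz => (hd z hz).deriv) hy hx
    refine hK (sub_eq_zero.1 ?_).symm
    simpa [hΘ] using this
  refine (hΘ' x hx).congr_of_eventuallyEq ?_
  filter_upwards [isOpen_Ioo.mem_nhds hx] with y hy using hconst y hy

theorem integral_ite_lt {p q : ℝ → H} {τ x : ℝ} (hx : x ∈ Icc 0 τ)
    (hp : IntervalIntegrable p volume 0 τ) (hq : IntervalIntegrable q volume 0 τ) :
    ∫ r in 0..τ, (if r < x then p r else q r) = (∫ r in 0..x, p r) + ∫ r in x..τ, q r := by
  have e1 : EqOn p (fun r => if r < x then p r else q r) (Ioo 0 x) := fun r hr =>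
    (if_pos hr.2).symm
  have e2 : EqOn q (fun r => if r < x then p r else q r) (Ioo x τ) := fun r hr =>
    (if_neg hr.1.not_gt).symm
  have hp' : IntervalIntegrable p volume 0 x := hp.mono_set (by
    rw [uIcc_of_le hx.1, uIcc_of_le (hx.1.trans hx.2)]; exact Icc_subset_Icc_right hx.2)
  have hq' : IntervalIntegrable q volume x τ := hq.mono_set (by
    rw [uIcc_of_le hx.2, uIcc_of_le (hx.1.trans hx.2)]; exact Icc_subset_Icc_left hx.1)
  rw [intervalIntegral.integral_congr_Ioo_of_le hx.1 e1,
    intervalIntegral.integral_congr_Ioo_of_le hx.2 e2,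
    intervalIntegral.integral_add_adjacent_intervals]
  · exact hp'.congr_uIoo (uIoo_of_le hx.1 ▸ e1)
  · exact hq'.congr_uIoo (uIoo_of_le hx.2 ▸ e2)

theorem integral_mem_graph {A : H →ₗ.[ℂ] H} (hA : IsSelfAdjoint A) {g h : ℝ → H} {a b : ℝ}
    (hab : a ≤ b)
    (hg : IntervalIntegrable g volume a b) (hh : IntervalIntegrable h volume a b)
    (hgh : ∀ r ∈ Ioo a b, (g r, h r) ∈ A.graph) :
    (∫ r in a..b, g r, ∫ r in a..b, h r) ∈ A.graph := by
  refine (mem_graph_iff_forall_inner hA).2 fun c d hcd => ?_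
  have h1 := (innerSL ℂ d).intervalIntegral_comp_comm hg
  have h2 := (innerSL ℂ c).intervalIntegral_comp_comm hh
  simp only [innerSL_apply_apply] at h1 h2
  rw [← h1, ← h2]
  exact intervalIntegral.integral_congr_Ioo_of_le hab
    fun r hr => inner_graph_symm hA hcd (hgh r hr)

theorem aestronglyMeasurable_clm_apply {V : ℝ → H →L[ℂ] H} {τ : ℝ} (hτ : 0 ≤ τ)
    (hV : ContinuousOn V (Ioo 0 τ)) {g : ℝ → H} (hg : StronglyMeasurable g) :
    AEStronglyMeasurable (fun r => V r (g r)) (volume.restrict (uIoc 0 τ)) := by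
  rw [uIoc_of_le hτ, ← Measure.restrict_congr_set Ioo_ae_eq_Ioc]
  exact (ContinuousLinearMap.id ℂ (H →L[ℂ] H)).aestronglyMeasurable_comp₂
    (hV.aestronglyMeasurable measurableSet_Ioo) hg.aestronglyMeasurable

variable {A : H →ₗ.[ℂ] H} {Φ : (ℝ → ℝ) → H →L[ℂ] H} {τ : ℝ} {F : ℝ → H}

theorem continuousOn_fermi (hΦ : IsFunctionalCalculus A Φ) :
    ContinuousOn (fun r => Φ (fermi τ r)) (Ioo 0 τ) :=
  fun _ hr => (hasDerivAt_fermi hΦ hr).continuousAt.continuousWithinAt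

theorem norm_fermi_apply_le (hΦ : IsFunctionalCalculus A Φ) (hτ : 0 < τ) {r : ℝ}
    (hr : r ∈ Icc 0 τ) (v : H) : ‖Φ (fermi τ r) v‖ ≤ ‖v‖ := by
  simpa using ContinuousLinearMap.le_of_opNorm_le _ (norm_fermi_le hΦ hτ hr) v

theorem intervalIntegrable_fermi_apply (hΦ : IsFunctionalCalculus A Φ) (hτ : 0 < τ) {g : ℝ → H}
    (hg : StronglyMeasurable g) {C : ℝ} (hC : ∀ r, ‖g r‖ ≤ C) :
    IntervalIntegrable (fun r => Φ (fermi τ r) (g r)) volume 0 τ := by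
  refine (intervalIntegrable_const (c := C)).mono_fun
    (aestronglyMeasurable_clm_apply hτ.le (continuousOn_fermi hΦ) hg) ?_
  refine (ae_restrict_mem measurableSet_uIoc).mono fun r hr => ?_
  rw [uIoc_of_le hτ.le] at hr
  exact ((norm_fermi_apply_le hΦ hτ (Ioc_subset_Icc_self hr) _).trans (hC r)).trans
    (le_abs_self C)

theorem integral_fermi_mem_graph (hA : IsSelfAdjoint A) (hΦ : IsFunctionalCalculus A Φ)
    (hτ : 0 < τ) {a b : ℝ} (ha : 0 ≤ a) (hab : a ≤ b) (hb : b ≤ τ) (c : H) :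
    (∫ r in a..b, Φ (fermi τ r) c, Φ (fermi τ a) c - Φ (fermi τ b) c) ∈ A.graph := by
  have hcont : ContinuousOn (fun r => Φ (fermi τ r) c) (Icc a b) :=
    (continuousOn_fermi_apply hΦ hτ c).mono (Icc_subset_Icc ha hb)
  have hint : IntervalIntegrable (fun r => Φ (fermi τ r) c) volume a b :=
    hcont.intervalIntegrable_of_Icc hab
  refine (mem_graph_iff_forall_inner hA).2 fun w w' hw => ?_
  have h1 := (innerSL ℂ w').intervalIntegral_comp_comm hint
  simp only [innerSL_apply_apply] at h1
  have h2 := intervalIntegral.integral_eq_sub_of_hasDerivAt_of_le hab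
    (f := fun r => -⟪w, Φ (fermi τ r) c⟫_ℂ) (f' := fun r => ⟪w', Φ (fermi τ r) c⟫_ℂ)
    ((continuousOn_const.inner hcont).neg) (fun r hr => ?_)
    ((continuousOn_const.inner hcont).intervalIntegrable_of_Icc hab)
  · rw [← h1, h2, inner_sub_right]
    ring
  · have hr' : r ∈ Ioo 0 τ := ⟨ha.trans_lt hr.1, hr.2.trans_le hb⟩
    have h3 := ((hasDerivAt_const r w).inner ℂ
      ((hasDerivAt_fermi hΦ hr').complex_clm_apply (hasDerivAt_const r c))).fun_neg
    have hc := continuousAtEnds_fermi_of_mem_Ioo hr'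
    have h4 := inner_graph_symm hA hw (hΦ.mem_graph hc.1 hc.2 c)
    simpa [h4] using h3

variable (Φ τ F) in
/-- The antiperiodic extension of `F` from `[0, τ]`, evaluated at `x - r`. -/
def antiperiodicShift (x r : ℝ) : H := if r < x then F (x - r) else -F (τ + x - r)

variable (Φ τ F) in
/-- A solution of `ψ' = -A ψ + F`, given by integration against the kernel `fermi`. -/
def particularSolution (x : ℝ) : H := ∫ r in 0..τ, Φ (fermi τ r) (antiperiodicShift τ F x r)

variable (Φ τ F) in
/-- The increment of the antiperiodic extension of `F`. -/
def antiperiodicIncrement (x r : ℝ) : H := if r < x then F (x - r) - F x else F x - F (τ + x - r)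

variable (Φ τ F) in
/-- The image of `particularSolution Φ τ F x` under `A`. -/
def particularImage (x : ℝ) : H :=
  (∫ r in 0..τ, Φ (fun y => y * fermi τ r y) (antiperiodicIncrement τ F x r)) +
    (F x - (2 : ℝ) • Φ (fermi τ x) (F x))

theorem stronglyMeasurable_ite_lt {p q : ℝ → H} (hp : Continuous p) (hq : Continuous q) (x : ℝ) :
    StronglyMeasurable fun r => if r < x then p r else q r :=
  .ite measurableSet_Iio hp.stronglyMeasurable hq.stronglyMeasurable

theorem continuousAt_ite_lt {p q : ℝ → H} (hp : Continuous p) (hq : Continuous q) {x r : ℝ}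
    (hr : r ≠ x) : ContinuousAt (fun x => if r < x then p x else q x) x := by
  rcases hr.lt_or_gt with h | h
  · refine hp.continuousAt.congr ?_
    filter_upwards [Ioi_mem_nhds h] with y hy using (if_pos hy).symm
  · refine hq.continuousAt.congr ?_
    filter_upwards [Iio_mem_nhds h] with y hy using (if_neg (not_lt_of_gt hy)).symm

theorem norm_antiperiodicShift_le {C : ℝ} (hC : ∀ x, ‖F x‖ ≤ C) (x r : ℝ) :
    ‖antiperiodicShift τ F x r‖ ≤ C := by
  unfold antiperiodicShift
  split_ifs
  · exact hC _
  · rw [norm_neg]; exact hC _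

theorem continuous_particularSolution (hΦ : IsFunctionalCalculus A Φ) (hτ : 0 < τ)
    (hF : Continuous F) {C : ℝ} (hC : ∀ x, ‖F x‖ ≤ C) : Continuous (particularSolution Φ τ F) := by
  refine continuous_iff_continuousAt.2 fun x => ?_
  refine intervalIntegral.continuousAt_of_dominated_interval (bound := fun _ => C)
    (.of_forall fun y => ?_) (.of_forall fun y => .of_forall fun r hr => ?_)
    intervalIntegrable_const ?_
  · exact aestronglyMeasurable_clm_apply hτ.le (continuousOn_fermi hΦ)
      (stronglyMeasurable_ite_lt (by fun_prop) (by fun_prop) y)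
  · rw [uIoc_of_le hτ.le] at hr
    exact (norm_fermi_apply_le hΦ hτ (Ioc_subset_Icc_self hr) _).trans
      (norm_antiperiodicShift_le hC y r)
  · filter_upwards [Measure.ae_ne volume x] with r hr _
    exact (Φ (fermi τ r)).continuous.continuousAt.comp
      (continuousAt_ite_lt (p := fun x => F (x - r)) (q := fun x => -F (τ + x - r))
        (by fun_prop) (by fun_prop) hr)

theorem particularSolution_eq (hΦ : IsFunctionalCalculus A Φ) (hτ : 0 < τ) (hF : Continuous F)
    {C : ℝ} (hC : ∀ x, ‖F x‖ ≤ C) {x : ℝ} (hx : x ∈ Icc 0 τ) :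
    particularSolution Φ τ F x = (∫ r in 0..x, Φ (fermi τ r) (F (x - r))) -
      ∫ r in x..τ, Φ (fermi τ r) (F (τ + x - r)) := by
  have h1 := intervalIntegrable_fermi_apply hΦ hτ (g := fun r => F (x - r))
    (by fun_prop : Continuous _).stronglyMeasurable fun r => hC _
  have h2 := intervalIntegrable_fermi_apply hΦ hτ (g := fun r => F (τ + x - r))
    (by fun_prop : Continuous _).stronglyMeasurable fun r => hC _
  have h3 := integral_ite_lt hx h1 h2.neg
  simp only [Pi.neg_apply, intervalIntegral.integral_neg, ← sub_eq_add_neg] at h3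
  rw [← h3, particularSolution]
  refine intervalIntegral.integral_congr fun r _ => ?_
  simp only [antiperiodicShift, apply_ite (Φ (fermi τ r)), map_neg]

section Hoelder

variable {K k : ℝ}

theorem norm_mul_fermi_increment_le (hΦ : IsFunctionalCalculus A Φ) (hK : 0 ≤ K)
    (hF : ∀ x y, ‖F x - F y‖ ≤ K * |x - y| ^ k) {δ x r : ℝ} (hδ : 0 < δ)
    (hx : x ∈ Ioo δ (τ - δ)) (hr : r ∈ Ioo 0 τ) :
    ‖Φ (fun y => y * fermi τ r y) (antiperiodicIncrement τ F x r)‖ ≤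
      K * ((r ^ (k - 1) + (τ - r) ^ (k - 1)) + δ⁻¹ * (r ^ k + (τ - r) ^ k)) := by
  have h0 : 0 < r := hr.1
  have h1 : 0 < τ - r := sub_pos.2 hr.2
  have hW := ContinuousLinearMap.le_of_opNorm_le _ (norm_mul_fermi_le hΦ hr)
    (antiperiodicIncrement τ F x r)
  refine hW.trans ?_
  have p1 : 0 < r ^ k := Real.rpow_pos_of_pos h0 _
  have p2 : 0 < (τ - r) ^ k := Real.rpow_pos_of_pos h1 _
  rw [Real.rpow_sub_one h0.ne', Real.rpow_sub_one h1.ne', div_eq_inv_mul, div_eq_inv_mul]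
  have i0 := inv_pos.2 h0
  have i1 := inv_pos.2 h1
  have i2 := inv_pos.2 hδ
  unfold antiperiodicIncrement
  split_ifs with h
  · have h2 : ‖F (x - r) - F x‖ ≤ K * r ^ k := by
      simpa [abs_of_pos h0] using hF (x - r) x
    have h3 : (τ - r)⁻¹ ≤ δ⁻¹ := inv_anti₀ hδ (by linarith [hx.2])
    calc _ ≤ (r⁻¹ + δ⁻¹) * (K * r ^ k) := by gcongr
      _ = K * (r⁻¹ * r ^ k + δ⁻¹ * r ^ k) := by ring
      _ ≤ _ := by
        gcongr
        · exact le_add_of_nonneg_right (by positivity)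
        · exact le_add_of_nonneg_right p2.le
  · have h2 : ‖F x - F (τ + x - r)‖ ≤ K * (τ - r) ^ k := by
      have := hF x (τ + x - r)
      rwa [show x - (τ + x - r) = -(τ - r) by ring, abs_neg, abs_of_pos h1] at this
    have h3 : r⁻¹ ≤ δ⁻¹ := inv_anti₀ hδ (by linarith [hx.1])
    calc _ ≤ (δ⁻¹ + (τ - r)⁻¹) * (K * (τ - r) ^ k) := by gcongr
      _ = K * ((τ - r)⁻¹ * (τ - r) ^ k + δ⁻¹ * (τ - r) ^ k) := by ring
      _ ≤ _ := by
        gcongr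
        · exact le_add_of_nonneg_left (by positivity)
        · exact le_add_of_nonneg_left p1.le

theorem intervalIntegrable_increment_bound (hk : 0 < k) (δ : ℝ) :
    IntervalIntegrable (fun r : ℝ => K * ((r ^ (k - 1) + (τ - r) ^ (k - 1)) +
      δ⁻¹ * (r ^ k + (τ - r) ^ k))) volume 0 τ := by
  have h1 : ∀ p : ℝ, -1 < p → IntervalIntegrable (fun r : ℝ => r ^ p + (τ - r) ^ p) volume 0 τ :=
    fun p hp => by
      have h := intervalIntegral.intervalIntegrable_rpow' (a := 0) (b := τ) hp
      have h' := h.comp_sub_left τ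
      simp only [sub_zero, sub_self] at h'
      exact h.add h'.symm
  exact (((h1 _ (by linarith)).add ((h1 _ (by linarith)).const_mul _)).const_mul _)

theorem ae_norm_mul_fermi_increment_le (hΦ : IsFunctionalCalculus A Φ) (hτ : 0 < τ) (hK : 0 ≤ K)
    (hF : ∀ x y, ‖F x - F y‖ ≤ K * |x - y| ^ k) {δ x : ℝ} (hδ : 0 < δ)
    (hx : x ∈ Ioo δ (τ - δ)) : ∀ᵐ r : ℝ, r ∈ uIoc 0 τ →
    ‖Φ (fun y => y * fermi τ r y) (antiperiodicIncrement τ F x r)‖ ≤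
      K * ((r ^ (k - 1) + (τ - r) ^ (k - 1)) + δ⁻¹ * (r ^ k + (τ - r) ^ k)) := by
  filter_upwards [Measure.ae_ne volume τ] with r hr hr'
  rw [uIoc_of_le hτ.le] at hr'
  exact norm_mul_fermi_increment_le hΦ hK hF hδ hx ⟨hr'.1, hr'.2.lt_of_ne hr⟩

theorem aestronglyMeasurable_increment (hΦ : IsFunctionalCalculus A Φ) (hτ : 0 < τ)
    (hF : Continuous F) (x : ℝ) : AEStronglyMeasurable
      (fun r => Φ (fun y => y * fermi τ r y) (antiperiodicIncrement τ F x r))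
      (volume.restrict (uIoc 0 τ)) :=
  aestronglyMeasurable_clm_apply hτ.le (continuousOn_mul_fermi hΦ)
    (stronglyMeasurable_ite_lt (by fun_prop) (by fun_prop) x)

theorem exists_mem_Ioo_sub {x : ℝ} (hx : x ∈ Ioo 0 τ) : ∃ δ > 0, x ∈ Ioo δ (τ - δ) := by
  obtain ⟨m, hm, hmt⟩ := exists_between (lt_min hx.1 (sub_pos.2 hx.2))
  obtain ⟨hmt, hmt'⟩ := lt_min_iff.1 hmt
  exact ⟨m, hm, hmt, by linarith⟩

theorem intervalIntegrable_increment (hΦ : IsFunctionalCalculus A Φ) (hτ : 0 < τ)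
    (hFc : Continuous F) (hK : 0 ≤ K) (hk : 0 < k)
    (hF : ∀ x y, ‖F x - F y‖ ≤ K * |x - y| ^ k) {x : ℝ} (hx : x ∈ Ioo 0 τ) :
    IntervalIntegrable (fun r => Φ (fun y => y * fermi τ r y) (antiperiodicIncrement τ F x r))
      volume 0 τ := by
  obtain ⟨δ, hδ, hxδ⟩ := exists_mem_Ioo_sub hx
  refine (intervalIntegrable_increment_bound (K := K) (k := k) hk δ).mono_fun'
    (aestronglyMeasurable_increment hΦ hτ hFc x) ?_
  exact (ae_restrict_iff' measurableSet_uIoc).2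
    (ae_norm_mul_fermi_increment_le hΦ hτ hK hF hδ hxδ)

theorem continuousOn_particularImage (hΦ : IsFunctionalCalculus A Φ) (hτ : 0 < τ)
    (hFc : Continuous F) (hK : 0 ≤ K) (hk : 0 < k)
    (hF : ∀ x y, ‖F x - F y‖ ≤ K * |x - y| ^ k) :
    ContinuousOn (particularImage Φ τ F) (Ioo 0 τ) := by
  refine ContinuousOn.add (fun x hx => ContinuousAt.continuousWithinAt ?_)
    (hFc.continuousOn.sub (((continuousOn_fermi hΦ).clm_apply hFc.continuousOn).const_smul _))
  obtain ⟨δ, hδ, hxδ⟩ := exists_mem_Ioo_sub hx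
  refine intervalIntegral.continuousAt_of_dominated_interval
    (.of_forall fun y => aestronglyMeasurable_increment hΦ hτ hFc y) ?_
    (intervalIntegrable_increment_bound (K := K) (k := k) hk δ) ?_
  · filter_upwards [isOpen_Ioo.mem_nhds hxδ] with y hy
    exact ae_norm_mul_fermi_increment_le hΦ hτ hK hF hδ hy
  · filter_upwards [Measure.ae_ne volume x] with r hr _
    exact (Φ fun y => y * fermi τ r y).continuous.continuousAt.comp
      (continuousAt_ite_lt (p := fun x => F (x - r) - F x) (q := fun x => F x - F (τ + x - r))
        (by fun_prop) (by fun_prop) hr)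

theorem particularSolution_mem_graph (hA : IsSelfAdjoint A) (hΦ : IsFunctionalCalculus A Φ)
    (hτ : 0 < τ) (hFc : Continuous F) {C : ℝ} (hC : ∀ x, ‖F x‖ ≤ C) (hK : 0 ≤ K) (hk : 0 < k)
    (hF : ∀ x y, ‖F x - F y‖ ≤ K * |x - y| ^ k) {x : ℝ} (hx : x ∈ Ioo 0 τ) :
    (particularSolution Φ τ F x, particularImage Φ τ F x) ∈ A.graph := by
  have hx' := Ioo_subset_Icc_self hx
  have hc : IntervalIntegrable (fun r => Φ (fermi τ r) (F x)) volume 0 τ :=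
    (continuousOn_fermi_apply hΦ hτ _).intervalIntegrable_of_Icc hτ.le
  have hs : ∀ r, antiperiodicShift τ F x r =
      antiperiodicIncrement τ F x r + if r < x then F x else -F x := fun r => by
    simp only [antiperiodicShift, antiperiodicIncrement]
    split_ifs <;> abel
  have hg : IntervalIntegrable (fun r => Φ (fermi τ r) (antiperiodicIncrement τ F x r))
      volume 0 τ := by
    refine intervalIntegrable_fermi_apply hΦ hτ (C := C + C)
      (stronglyMeasurable_ite_lt (by fun_prop) (by fun_prop) x) fun r => ?_
    unfold antiperiodicIncrement
    split_ifs <;> exact (norm_sub_le _ _).trans (add_le_add (hC _) (hC _))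
  have h1 := integral_mem_graph hA hτ.le hg (intervalIntegrable_increment hΦ hτ hFc hK hk hF hx)
    fun r hr => hΦ.mem_graph (continuousAtEnds_fermi_of_mem_Ioo hr).1
      (continuousAtEnds_fermi_of_mem_Ioo hr).2 _
  have h2 := integral_fermi_mem_graph hA hΦ hτ le_rfl hx.1.le hx.2.le (F x)
  have h3 := integral_fermi_mem_graph hA hΦ hτ hx.1.le hx.2.le le_rfl (F x)
  have h4 := integral_ite_lt hx' hc hc.neg
  have h5 : IntervalIntegrable (fun r => Φ (fermi τ r) (if r < x then F x else -F x))
      volume 0 τ := by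
    refine intervalIntegrable_fermi_apply hΦ hτ (C := C)
      (stronglyMeasurable_ite_lt continuous_const continuous_const x) fun r => ?_
    split_ifs
    · exact hC x
    · rw [norm_neg]; exact hC x
  convert A.graph.add_mem h1 (A.graph.sub_mem h2 h3) using 1
  refine Prod.ext ?_ ?_
  · simp only [particularSolution, hs, map_add]
    rw [intervalIntegral.integral_add hg h5]
    simp only [Pi.neg_apply, intervalIntegral.integral_neg, ← sub_eq_add_neg] at h4
    simp only [apply_ite (Φ _), map_neg, h4, Prod.fst_add, Prod.fst_sub]
  · have h6 : Φ (fermi τ 0) (F x) + Φ (fermi τ τ) (F x) = F x := by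
      simpa using congrArg (fun T : H →L[ℂ] H => T (F x)) (fermi_zero_add_fermi_self_map hΦ hτ)
    simp only [particularImage, Prod.snd_add, Prod.snd_sub]
    congr 1
    nth_rw 1 [← h6]
    rw [two_smul]
    abel

variable (Φ τ F) in
/-- The function `α` with `Φ(exp (-y²)) ψ(x) = Φ(exp (-x y - y² / 2)) α(x)`,
where `ψ = particularSolution Φ τ F`. -/
def gaussianCoefficient (x : ℝ) : H :=
  (∫ s in 0..x, Φ (gaussianExp (-s)) (Φ (fermi τ 0) (F s))) -
    ∫ s in x..τ, Φ (gaussianExp (-s)) (Φ (fermi τ τ) (F s))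

theorem continuous_gaussianExp_neg_apply (hΦ : IsFunctionalCalculus A Φ) {g : ℝ → H}
    (hg : Continuous g) : Continuous fun s => Φ (gaussianExp (-s)) (g s) := by
  have h : Continuous fun t => Φ (gaussianExp t) :=
    continuous_iff_continuousAt.2 fun t => (hasDerivAt_gaussianExp hΦ t).continuousAt
  exact (h.comp continuous_neg).clm_apply hg

theorem gaussianExp_particularSolution (hΦ : IsFunctionalCalculus A Φ) (hτ : 0 < τ)
    (hF : Continuous F) {C : ℝ} (hC : ∀ x, ‖F x‖ ≤ C) {x : ℝ} (hx : x ∈ Icc 0 τ) :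
    (Φ (gaussianExp 0) * Φ (gaussianExp 0)) (particularSolution Φ τ F x) =
      Φ (gaussianExp x) (gaussianCoefficient Φ τ F x) := by
  set Q := Φ (gaussianExp 0) * Φ (gaussianExp 0)
  have h1 := intervalIntegrable_fermi_apply hΦ hτ (g := fun r => F (x - r))
    (by fun_prop : Continuous _).stronglyMeasurable fun r => hC _
  have h2 := intervalIntegrable_fermi_apply hΦ hτ (g := fun r => F (τ + x - r))
    (by fun_prop : Continuous _).stronglyMeasurable fun r => hC _
  have h1' := h1.mono_set (c := 0) (d := x) (by
    rw [uIcc_of_le hx.1, uIcc_of_le hτ.le]; exact Icc_subset_Icc_right hx.2)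
  have h2' := h2.mono_set (c := x) (d := τ) (by
    rw [uIcc_of_le hx.2, uIcc_of_le hτ.le]; exact Icc_subset_Icc_left hx.1)
  have hc : ∀ r, Continuous fun s => Φ (gaussianExp (-s)) (Φ (fermi τ r) (F s)) := fun r =>
    continuous_gaussianExp_neg_apply hΦ (by fun_prop)
  rw [particularSolution_eq hΦ hτ hF hC hx, gaussianCoefficient, map_sub, map_sub,
    ← Q.intervalIntegral_comp_comm h1', ← Q.intervalIntegral_comp_comm h2',
    ← (Φ (gaussianExp x)).intervalIntegral_comp_comm ((hc 0).intervalIntegrable _ _),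
    ← (Φ (gaussianExp x)).intervalIntegral_comp_comm ((hc τ).intervalIntegrable _ _)]
  have e1 := intervalIntegral.integral_comp_sub_left (a := 0) (b := x)
    (fun r => Q (Φ (fermi τ r) (F (x - r)))) x
  have e2 := intervalIntegral.integral_comp_sub_left (a := x) (b := τ)
    (fun r => Q (Φ (fermi τ r) (F (τ + x - r)))) (τ + x)
  simp only [sub_self, sub_zero, add_sub_cancel_left, add_sub_cancel_right] at e1 e2
  rw [← e1, ← e2]
  congr 1 <;> refine intervalIntegral.integral_congr fun s hs => ?_
  · rw [uIcc_of_le hx.1] at hs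
    have := gaussianExp_mul_fermi hΦ hτ (r := x - s) (r' := 0) (x := x) (s := s)
      ⟨by linarith [hs.2], by linarith [hs.1, hx.2]⟩ ⟨le_rfl, hτ.le⟩ (by ring)
    simpa [Q] using congrArg (fun T : H →L[ℂ] H => T (F s)) this
  · rw [uIcc_of_le hx.2] at hs
    have := gaussianExp_mul_fermi hΦ hτ (r := τ + x - s) (r' := τ) (x := x) (s := s)
      ⟨by linarith [hs.2, hx.1], by linarith [hs.1]⟩ ⟨hτ.le, le_rfl⟩ (by ring)
    simpa [Q] using congrArg (fun T : H →L[ℂ] H => T (F s)) this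

theorem hasDerivAt_gaussianCoefficient (hΦ : IsFunctionalCalculus A Φ) (hτ : 0 < τ)
    (hF : Continuous F) (x : ℝ) :
    HasDerivAt (gaussianCoefficient Φ τ F) (Φ (gaussianExp (-x)) (F x)) x := by
  have hc : ∀ r, Continuous fun s => Φ (gaussianExp (-s)) (Φ (fermi τ r) (F s)) := fun r =>
    continuous_gaussianExp_neg_apply hΦ (by fun_prop)
  have h1 := ((hc 0).integral_hasStrictDerivAt 0 x).hasDerivAt
  have h2 := ((hc τ).integral_hasStrictDerivAt τ x).hasDerivAt
  have h3 := h1.add h2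
  have h6 : Φ (fermi τ 0) (F x) + Φ (fermi τ τ) (F x) = F x := by
    simpa using congrArg (fun T : H →L[ℂ] H => T (F x)) (fermi_zero_add_fermi_self_map hΦ hτ)
  rw [← map_add, h6] at h3
  refine h3.congr_of_eventuallyEq (.of_forall fun y => ?_)
  rw [gaussianCoefficient, intervalIntegral.integral_symm τ y, sub_neg_eq_add]
  rfl

theorem map_id_mul_apply_of_mem_graph (hA : IsSelfAdjoint A) (hΦ : IsFunctionalCalculus A Φ)
    {g : ℝ → ℝ} (hg : ContinuousAtEnds g) (hg' : ContinuousAtEnds fun x => x * g x) {a b : H}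
    (hab : (a, b) ∈ A.graph) : Φ (fun x => x * g x) a = Φ g b := by
  refine ext_inner_left ℂ fun w => ?_
  have h := inner_graph_symm hA (hΦ.mem_graph hg hg' w) hab
  have h1 := (hΦ.isSelfAdjoint g).isSymmetric w b
  have h2 := (hΦ.isSelfAdjoint fun x => x * g x).isSymmetric w a
  simp only [ContinuousLinearMap.coe_coe] at h1 h2
  rw [← h1, ← h2, h]

theorem hasDerivAt_particularSolution (hA : IsSelfAdjoint A) (hΦ : IsFunctionalCalculus A Φ)
    (hτ : 0 < τ) (hFc : Continuous F) {C : ℝ} (hC : ∀ x, ‖F x‖ ≤ C) (hK : 0 ≤ K) (hk : 0 < k)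
    (hF : ∀ x y, ‖F x - F y‖ ≤ K * |x - y| ^ k) {x : ℝ} (hx : x ∈ Ioo 0 τ) :
    HasDerivAt (particularSolution Φ τ F) (F x - particularImage Φ τ F x) x := by
  refine hasDerivAt_of_injective_comp (gaussianExp_zero_injective hΦ)
    (v := fun x => F x - particularImage Φ τ F x)
    (hFc.continuousOn.sub (continuousOn_particularImage hΦ hτ hFc hK hk hF)) (fun x hx => ?_) hx
  have h := (hasDerivAt_gaussianExp hΦ x).complex_clm_apply
    (hasDerivAt_gaussianCoefficient hΦ hτ hFc x)
  have hgr := particularSolution_mem_graph hA hΦ hτ hFc hC hK hk hF hx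
  have g0 := continuousAtEnds_gaussianExp 0
  have gx := continuousAtEnds_gaussianExp x
  have e1 := gaussianExp_particularSolution hΦ hτ hFc hC (Ioo_subset_Icc_self hx)
  have e2 := hΦ.mem_graph gx.1 gx.2 (gaussianCoefficient Φ τ F x)
  rw [← e1] at e2
  have e3 := graph_unique e2 (hΦ.mem_graph g0.1 g0.2 (Φ (gaussianExp 0) _))
  have e4 : Φ (fun y => y * gaussianExp 0 y) * Φ (gaussianExp 0) =
      Φ (gaussianExp 0) * Φ (fun y => y * gaussianExp 0 y) := by
    rw [← hΦ.map_mul g0.2 g0.1, ← hΦ.map_mul g0.1 g0.2]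
    simp only [mul_comm]
  have e5 := congrArg (fun T : H →L[ℂ] H => T (particularSolution Φ τ F x)) e4
  have e6 := congrArg (fun T : H →L[ℂ] H => T (F x)) (gaussianExp_mul_neg hΦ x)
  simp only [mul_apply_eq_comp] at e5 e6
  rw [map_id_mul_apply_of_mem_graph hA hΦ g0.1 g0.2 hgr] at e5
  have hev : (fun y => (Φ (gaussianExp 0) * Φ (gaussianExp 0)) (particularSolution Φ τ F y)) =ᶠ[𝓝 x]
      fun y => Φ (gaussianExp y) (gaussianCoefficient Φ τ F y) := by
    filter_upwards [isOpen_Ioo.mem_nhds hx] with y hy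
    exact gaussianExp_particularSolution hΦ hτ hFc hC (Ioo_subset_Icc_self hy)
  convert h.congr_of_eventuallyEq hev using 1
  simp only [neg_apply, e3, e5, e6, map_sub, mul_apply_eq_comp]
  abel

end Hoelder

end ParticularSolution

theorem IsSignatureOperator.apply_apply {J : H →L[ℂ] H} (hJ : IsSignatureOperator J) (v : H) :
    J (J v) = v :=
  congrArg (fun T : H →L[ℂ] H => T v) hJ.2

theorem IsSelfAdjoint.inner_apply {T : H →L[ℂ] H} (hT : IsSelfAdjoint T) (x y : H) :
    ⟪T x, y⟫_ℂ = ⟪x, T y⟫_ℂ := hT.isSymmetric x y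

theorem IsPositivePMap.re_inner_pos {L : H →ₗ.[ℂ] H} (hL : IsPositivePMap L) {h : L.domain}
    (hh : (h : H) ≠ 0) : 0 < (⟪L h, (h : H)⟫_ℂ).re :=
  (Complex.pos_iff.1 (hL h hh)).1

theorem IsPositivePMap.re_inner_nonneg {L : H →ₗ.[ℂ] H} (hL : IsPositivePMap L) (h : L.domain) :
    0 ≤ (⟪L h, (h : H)⟫_ℂ).re := by
  by_cases hh : (h : H) = 0
  · simp [hh]
  · exact (hL.re_inner_pos hh).le

theorem eqOn_zero_of_homogeneous {J : H →L[ℂ] H} (hJ : IsSignatureOperator J) {L : H →ₗ.[ℂ] H}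
    (hL : IsPositivePMap L) {τ : ℝ} (hτ : 0 < τ) {ψ : ℝ → H} (hψ : ContinuousOn ψ (Icc 0 τ))
    (hd : ∀ x ∈ Ioo 0 τ, ∃ h : L.domain, (h : H) = ψ x ∧ HasDerivAt ψ (-J (L h)) x)
    (h0 : Pplus J (ψ 0) = 0) (h1 : Pminus J (ψ τ) = 0) : EqOn ψ 0 (Icc 0 τ) := by
  set q : ℝ → ℝ := fun x => (⟪J (ψ x), ψ x⟫_ℂ).re with hq
  have hqc : ContinuousOn q (Icc 0 τ) :=
    Complex.continuous_re.comp_continuousOn ((J.continuous.comp_continuousOn hψ).inner hψ)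
  have hqd : ∀ x ∈ Ioo 0 τ, ∃ h : L.domain, (h : H) = ψ x ∧
      HasDerivAt q (-(2 * (⟪L h, (h : H)⟫_ℂ).re)) x := by
    intro x hx
    obtain ⟨h, hh, hd⟩ := hd x hx
    refine ⟨h, hh, ?_⟩
    have h2 := Complex.reCLM.hasFDerivAt.comp_hasDerivAt x
      ((((hasDerivAt_const x J).complex_clm_apply hd)).inner ℂ hd)
    refine h2.congr_deriv ?_
    have e : (⟪ψ x, L h⟫_ℂ).re = (⟪L h, ψ x⟫_ℂ).re := inner_re_symm (𝕜 := ℂ) _ _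
    simp [hJ.1.inner_apply (ψ x), hJ.apply_apply, e, hh]
    ring
  have hanti : AntitoneOn q (Icc 0 τ) := by
    refine antitoneOn_of_deriv_nonpos (convex_Icc 0 τ) hqc ?_ ?_ <;> rw [interior_Icc]
    · intro x hx
      obtain ⟨h, -, hd⟩ := hqd x hx
      exact hd.differentiableAt.differentiableWithinAt
    · intro x hx
      obtain ⟨h, -, hd⟩ := hqd x hx
      rw [hd.deriv]
      linarith [hL.re_inner_nonneg h]
  have hl : (0 : ℝ) ∈ Icc 0 τ := ⟨le_rfl, hτ.le⟩
  have hr : τ ∈ Icc 0 τ := ⟨hτ.le, le_rfl⟩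
  have hq0 : q 0 ≤ 0 := by
    have : J (ψ 0) = -ψ 0 := by
      simp only [Pplus, smul_apply, smul_eq_zero, inv_eq_zero,
        OfNat.ofNat_ne_zero, false_or, add_apply,
        ContinuousLinearMap.id_apply] at h0
      exact eq_neg_of_add_eq_zero_right h0
    simp only [hq, this, inner_neg_left, Complex.neg_re, Left.neg_nonpos_iff]
    exact inner_self_nonneg (𝕜 := ℂ)
  have hqτ : 0 ≤ q τ := by
    have : J (ψ τ) = ψ τ := by
      simp only [Pminus, smul_apply, smul_eq_zero, inv_eq_zero,
        OfNat.ofNat_ne_zero, false_or, sub_apply,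
        ContinuousLinearMap.id_apply] at h1
      exact (sub_eq_zero.1 h1).symm
    simp only [hq, this]
    exact inner_self_nonneg (𝕜 := ℂ)
  have hqz : ∀ x ∈ Icc 0 τ, q x = 0 := fun x hx =>
    le_antisymm ((hanti hl hx hx.1).trans hq0) (hqτ.trans (hanti hx hr hx.2))
  have hz : EqOn ψ 0 (Ioo 0 τ) := by
    intro x hx
    obtain ⟨h, hh, hd⟩ := hqd x hx
    have hev : (fun _ => (0 : ℝ)) =ᶠ[𝓝 x] q := by
      filter_upwards [isOpen_Ioo.mem_nhds hx] with y hy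
      exact (hqz y (Ioo_subset_Icc_self hy)).symm
    have h3 := (hd.congr_of_eventuallyEq hev).unique (hasDerivAt_const x (0 : ℝ))
    by_contra hne
    have := hL.re_inner_pos (h := h) (hh ▸ hne)
    linarith
  exact hz.of_subset_closure hψ continuousOn_const Ioo_subset_Icc_self (closure_Ioo hτ.ne).ge

theorem IsStrongSolutionOn.exists_hasDerivAt_sub {J : H →L[ℂ] H} {L : H →ₗ.[ℂ] H}
    {f ψ₁ ψ₂ : ℝ → H} {s : Set ℝ} (h₁ : IsStrongSolutionOn (pmapComp J L) f ψ₁ s)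
    (h₂ : IsStrongSolutionOn (pmapComp J L) f ψ₂ s) {x : ℝ} (hx : x ∈ s) :
    ∃ h : L.domain, (h : H) = ψ₁ x - ψ₂ x ∧
      HasDerivAt (fun x => ψ₁ x - ψ₂ x) (-J (L h)) x := by
  obtain ⟨ψ₁', -, h₁⟩ := h₁
  obtain ⟨ψ₂', -, h₂⟩ := h₂
  obtain ⟨hd₁, hx₁, e₁⟩ := h₁ x hx
  obtain ⟨hd₂, hx₂, e₂⟩ := h₂ x hx
  refine ⟨(⟨ψ₁ x, hx₁⟩ : L.domain) - (⟨ψ₂ x, hx₂⟩ : L.domain), rfl, ?_⟩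
  refine (hd₁.fun_sub hd₂).congr_deriv ?_
  have e₁' : ψ₁' x = -J (L ⟨ψ₁ x, hx₁⟩) + f x := e₁
  have e₂' : ψ₂' x = -J (L ⟨ψ₂ x, hx₂⟩) + f x := e₂
  rw [e₁', e₂', LinearPMap.map_sub, map_sub]
  abel

section Positivity

variable {A : H →ₗ.[ℂ] H} {Φ : (ℝ → ℝ) → H →L[ℂ] H}

theorem re_inner_map_nonneg (hΦ : IsFunctionalCalculus A Φ) {M : H →L[ℂ] H}
    (hM : ∀ a b, (a, b) ∈ A.graph → (M a, M b) ∈ A.graph)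
    (hpos : ∀ a b, (a, b) ∈ A.graph → 0 ≤ (⟪M b, a⟫_ℂ).re)
    (hinj : ∀ a, (a, 0) ∈ A.graph → a = 0) {t : ℝ → ℝ} (ht : ContinuousAtEnds t)
    (ht0 : ∀ x, 0 ≤ x * t x) (v : H) : 0 ≤ (⟪M (Φ t v), v⟫_ℂ).re := by
  obtain ⟨hg, hxg⟩ := continuousAtEnds_gaussianExp 0
  set g := gaussianExp 0
  have he := hg.mul hxg
  set e : ℝ → ℝ := fun x => g x * (x * g x)
  have hte := ht.mul he
  have hte0 : ∀ x, 0 ≤ t x * e x := fun x => by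
    have : t x * e x = (x * t x) * g x ^ 2 := by simp only [e]; ring
    rw [this]
    exact mul_nonneg (ht0 x) (sq_nonneg _)
  have hs := hte.sqrt
  set s : ℝ → ℝ := fun x => √(t x * e x)
  have hss : Φ t * Φ e = Φ s * Φ s := by
    rw [← hΦ.map_mul ht he, ← hΦ.map_mul hs hs]
    exact congrArg Φ (funext fun x => (Real.mul_self_sqrt (hte0 x)).symm)
  have hes : Φ e * Φ s = Φ s * Φ e := by
    rw [← hΦ.map_mul he hs, ← hΦ.map_mul hs he]
    simp only [mul_comm]
  have hE : Φ e = Φ g * Φ fun x => x * g x := hΦ.map_mul hg hxg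
  have happ : ∀ {P Q : H →L[ℂ] H}, P = Q → ∀ v, P v = Q v := fun h v => by rw [h]
  have hME : ∀ z, 0 ≤ (⟪M (Φ e z), z⟫_ℂ).re := fun z => by
    rw [hE, mul_apply_eq_comp, ← mul_apply_eq_comp M,
      (hΦ.commute hM g).eq, mul_apply_eq_comp, (hΦ.isSelfAdjoint g).inner_apply]
    exact hpos _ _ (hΦ.mem_graph hg hxg z)
  have hEinj : Function.Injective (Φ e) := by
    have h1 := hΦ.injective hg fun x => (mul_pos (Real.exp_pos _) (Real.exp_pos _)).ne'
    rw [injective_iff_map_eq_zero]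
    intro y hy
    rw [hE, mul_apply_eq_comp, map_eq_zero_iff _ h1] at hy
    have h2 := hΦ.mem_graph hg hxg y
    rw [hy] at h2
    exact (map_eq_zero_iff _ h1).1 (hinj _ h2)
  have hdense := denseRange_of_selfAdjoint_injective (hΦ.isSelfAdjoint e) hEinj
  refine hdense.induction_on v ?_ fun y => ?_
  · exact isClosed_le continuous_const (by fun_prop)
  · have k1 : Φ t (Φ e y) = Φ s (Φ s y) := happ hss y
    have k2 : ∀ z, Φ e (M z) = M (Φ e z) := fun z => (happ (hΦ.commute hM e).eq z).symm
    have k3 : ∀ z, Φ e (Φ s z) = Φ s (Φ e z) := happ hes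
    have k4 : ∀ z, M (Φ s z) = Φ s (M z) := happ (hΦ.commute hM s).eq
    rw [k1, ← (hΦ.isSelfAdjoint e).inner_apply, k2, k3, k4, (hΦ.isSelfAdjoint s).inner_apply]
    exact hME _

theorem mul_fermi_sub_nonneg {τ : ℝ} (hτ : 0 < τ) (x : ℝ) :
    0 ≤ x * (fermi τ 0 x - fermi τ τ x) := by
  simp only [fermi, zero_mul, neg_zero, Real.exp_zero, ← sub_mul, ← mul_assoc]
  refine mul_nonneg ?_ (inv_pos.2 (one_add_exp_pos _)).le
  rcases le_total 0 x with h | h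
  · exact mul_nonneg h (sub_nonneg.2 (Real.exp_le_one_iff.2 (by nlinarith)))
  · exact mul_nonneg_of_nonpos_of_nonpos h
      (sub_nonpos.2 (Real.one_le_exp (by nlinarith)))

end Positivity

section Similarity

variable {J : H →L[ℂ] H} {L A : H →ₗ.[ℂ] H} {S : H ≃L[ℂ] H}

theorem exists_of_mem_graph_of_similar
    (hdom : (A.domain : Set H) = (fun h => S h) '' ((pmapComp J L).domain : Set H))
    (hAS : ∀ (h : (pmapComp J L).domain) (hSh : S (h : H) ∈ A.domain),
      A ⟨S (h : H), hSh⟩ = S (pmapComp J L h)) {a b : H} (hab : (a, b) ∈ A.graph) :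
    ∃ h : L.domain, a = S h ∧ b = S (J (L h)) := by
  obtain ⟨⟨y, hy⟩, rfl, rfl⟩ := (LinearPMap.mem_graph_iff A).1 hab
  have hy' : y ∈ (A.domain : Set H) := hy
  rw [hdom] at hy'
  obtain ⟨h, hh, rfl⟩ := hy'
  exact ⟨⟨h, hh⟩, rfl, hAS ⟨h, hh⟩ hy⟩

variable (J S) in
/-- The Gram operator of the indefinite form `⟪J ·, ·⟫` transported by `S`. -/
def gramOperator : H →L[ℂ] H :=
  ContinuousLinearMap.adjoint (S.symm : H →L[ℂ] H) * (J * (S.symm : H →L[ℂ] H))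

theorem inner_gramOperator_left (x y : H) :
    ⟪gramOperator J S x, y⟫_ℂ = ⟪J (S.symm x), S.symm y⟫_ℂ := by
  simp [gramOperator, ContinuousLinearMap.adjoint_inner_left]

theorem inner_gramOperator_right (hJ : IsSignatureOperator J) (x y : H) :
    ⟪x, gramOperator J S y⟫_ℂ = ⟪J (S.symm x), S.symm y⟫_ℂ := by
  simp [gramOperator, ContinuousLinearMap.adjoint_inner_right, hJ.1.inner_apply]

theorem gramOperator_mem_graph (hJ : IsSignatureOperator J) (hA : IsSelfAdjoint A)
    (hL : IsSelfAdjoint L)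
    (hgraph : ∀ a b, (a, b) ∈ A.graph → ∃ h : L.domain, a = S h ∧ b = S (J (L h))) {a b : H}
    (hab : (a, b) ∈ A.graph) : (gramOperator J S a, gramOperator J S b) ∈ A.graph := by
  refine (mem_graph_iff_forall_inner hA).2 fun c d hcd => ?_
  obtain ⟨h, rfl, rfl⟩ := hgraph a b hab
  obtain ⟨h', rfl, rfl⟩ := hgraph c d hcd
  rw [inner_gramOperator_right hJ, inner_gramOperator_right hJ]
  simpa [hJ.1.inner_apply (h' : H), hJ.apply_apply] using
    inner_graph_symm hL (L.mem_graph h') (L.mem_graph h)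

theorem re_inner_gramOperator_nonneg (hJ : IsSignatureOperator J) (hL : IsPositivePMap L)
    (hgraph : ∀ a b, (a, b) ∈ A.graph → ∃ h : L.domain, a = S h ∧ b = S (J (L h))) {a b : H}
    (hab : (a, b) ∈ A.graph) : 0 ≤ (⟪gramOperator J S b, a⟫_ℂ).re := by
  obtain ⟨h, rfl, rfl⟩ := hgraph a b hab
  simpa [inner_gramOperator_left, hJ.apply_apply] using hL.re_inner_nonneg h

theorem eq_zero_of_mem_graph_zero (hJ : IsSignatureOperator J) (hL : IsPositivePMap L)
    (hgraph : ∀ a b, (a, b) ∈ A.graph → ∃ h : L.domain, a = S h ∧ b = S (J (L h))) {a : H}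
    (ha : (a, 0) ∈ A.graph) : a = 0 := by
  obtain ⟨h, rfl, h0⟩ := hgraph a 0 ha
  have hJL : J (L h) = 0 := S.map_eq_zero_iff.1 h0.symm
  have hLh : L h = 0 := by rw [← hJ.apply_apply (L h), hJL, map_zero]
  by_contra hne
  have hh : (h : H) ≠ 0 := fun h1 => hne (by rw [h1, map_zero])
  simpa [hLh] using hL.re_inner_pos hh

theorem exists_boundary_value (hJ : IsSignatureOperator J) (hA : IsSelfAdjoint A)
    (hLsa : IsSelfAdjoint L) (hL : IsPositivePMap L)
    (hgraph : ∀ a b, (a, b) ∈ A.graph → ∃ h : L.domain, a = S h ∧ b = S (J (L h)))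
    {Φ : (ℝ → ℝ) → H →L[ℂ] H} (hΦ : IsFunctionalCalculus A Φ) {τ : ℝ} (hτ : 0 < τ) (y : H) :
    ∃ w, Pplus J (S.symm (Φ (fermi τ 0) w)) + Pminus J (S.symm (Φ (fermi τ τ) w)) = y := by
  have hc0 := continuousAtEnds_fermi hτ (t := 0) ⟨le_rfl, hτ.le⟩
  have hcτ := continuousAtEnds_fermi hτ (t := τ) ⟨hτ.le, le_rfl⟩
  set T := Φ fun x => fermi τ 0 x - fermi τ τ x with hT
  have hT' : T = Φ (fermi τ 0) - Φ (fermi τ τ) := hΦ.map_sub hc0 hcτ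
  set V : H →L[ℂ] H := 1 + J * ((S.symm : H →L[ℂ] H) * (T * (S : H →L[ℂ] H))) with hV
  have hVu : IsUnit V := by
    refine ContinuousLinearMap.isUnit_of_forall_le_norm_inner_map V (c := 1) one_pos fun v => ?_
    have h1 := re_inner_map_nonneg hΦ (fun _ _ => gramOperator_mem_graph hJ hA hLsa hgraph)
      (fun _ _ => re_inner_gramOperator_nonneg hJ hL hgraph)
      (fun _ => eq_zero_of_mem_graph_zero hJ hL hgraph) (hc0.sub hcτ)
      (mul_fermi_sub_nonneg hτ) (S v)
    rw [inner_gramOperator_left, S.symm_apply_apply] at h1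
    have h2 : (⟪v, v⟫_ℂ).re = ‖v‖ ^ 2 := inner_self_eq_norm_sq (𝕜 := ℂ) v
    refine le_trans ?_ (Complex.re_le_norm _)
    simp only [hV, add_apply, mul_apply_eq_comp,
      one_apply_eq_self, inner_add_left, Complex.add_re, NNReal.coe_one, mul_one,
      ContinuousLinearEquiv.coe_coe]
    linarith
  obtain ⟨v, hv⟩ := (ContinuousLinearMap.isUnit_iff_bijective.1 hVu).2 ((2 : ℂ) • y)
  refine ⟨S v, ?_⟩
  have h3 : Φ (fermi τ 0) (S v) + Φ (fermi τ τ) (S v) = S v := by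
    simpa using congrArg (fun T : H →L[ℂ] H => T (S v)) (fermi_zero_add_fermi_self_map hΦ hτ)
  have h4 : S.symm (Φ (fermi τ 0) (S v)) + S.symm (Φ (fermi τ τ) (S v)) = v := by
    rw [← map_add, h3, S.symm_apply_apply]
  have h5 : y = (2⁻¹ : ℂ) • V v := by rw [hv, inv_smul_smul₀ two_ne_zero]
  have h6 : V v = v + J (S.symm (Φ (fermi τ 0) (S v)) - S.symm (Φ (fermi τ τ) (S v))) := by
    rw [← map_sub, ← sub_apply, ← hT']
    rfl
  rw [h5, h6]
  simp only [Pplus, Pminus, smul_apply, add_apply,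
    sub_apply, ContinuousLinearMap.id_apply, ← smul_add, map_sub]
  congr 1
  nth_rw 5 [← h4]
  abel

theorem eq_of_Pplus_add_Pminus_eq (hJ : IsSignatureOperator J) {u v φp φm : H} (hφp : J φp = φp)
    (hφm : J φm = -φm) (h : Pplus J u + Pminus J v = φp + φm) :
    Pplus J u = φp ∧ Pminus J v = φm := by
  have h1 : J (Pplus J u) = Pplus J u := by
    simp [Pplus, hJ.apply_apply, add_comm]
  have h2 : J (Pminus J v) = -Pminus J v := by
    simp only [Pminus, smul_apply, sub_apply,
      ContinuousLinearMap.id_apply, map_smul, map_sub, hJ.apply_apply, ← smul_neg, neg_sub]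
  have h3 := congrArg J h
  rw [map_add, map_add, h1, h2, hφp, hφm] at h3
  have h4 : (2 : ℂ) • Pplus J u = (2 : ℂ) • φp := by
    have h5 : Pplus J u + Pminus J v + (Pplus J u + -Pminus J v) = φp + φm + (φp + -φm) := by
      rw [h, h3]
    rw [two_smul, two_smul]
    convert h5 using 1 <;> abel
  have h5 := smul_right_injective H (two_ne_zero (α := ℂ)) h4
  exact ⟨h5, add_left_cancel (h5 ▸ h)⟩

end Similarity

theorem continuous_of_norm_sub_le {F : ℝ → H} {K k : ℝ} (hk : 0 < k)
    (hF : ∀ x y, ‖F x - F y‖ ≤ K * |x - y| ^ k) : Continuous F := by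
  refine continuous_iff_continuousAt.2 fun y => tendsto_iff_norm_sub_tendsto_zero.2 ?_
  refine squeeze_zero (fun _ => norm_nonneg _) (fun x => hF x y) ?_
  have h : Continuous fun x : ℝ => K * |x - y| ^ k :=
    continuous_const.mul ((by fun_prop : Continuous fun x : ℝ => |x - y|).rpow_const
      fun _ => .inr hk.le)
  exact h.tendsto' _ _ (by simp [hk.ne'])

theorem norm_projIcc_sub_le {f : ℝ → H} {τ K k : ℝ} (hτ : 0 ≤ τ) (hK : 0 ≤ K) (hk : 0 ≤ k)
    (hf : ∀ x ∈ Icc (0 : ℝ) τ, ∀ y ∈ Icc (0 : ℝ) τ, ‖f x - f y‖ ≤ K * |x - y| ^ k)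
    (S : H →L[ℂ] H) (x y : ℝ) :
    ‖S (f (projIcc 0 τ hτ x)) - S (f (projIcc 0 τ hτ y))‖ ≤ ‖S‖ * K * |x - y| ^ k := by
  rw [← map_sub, mul_assoc]
  refine (S.le_opNorm _).trans (mul_le_mul_of_nonneg_left ?_ (norm_nonneg _))
  refine (hf _ (projIcc 0 τ hτ x).2 _ (projIcc 0 τ hτ y).2).trans ?_
  exact mul_le_mul_of_nonneg_left
    (Real.rpow_le_rpow (abs_nonneg _) (abs_projIcc_sub_projIcc hτ) hk) hK

theorem exists_strongSolution {J : H →L[ℂ] H} {L A : H →ₗ.[ℂ] H} {S : H ≃L[ℂ] H}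
    (hJ : IsSignatureOperator J) (hA : IsSelfAdjoint A) (hLsa : IsSelfAdjoint L)
    (hL : IsPositivePMap L)
    (hgraph : ∀ a b, (a, b) ∈ A.graph → ∃ h : L.domain, a = S h ∧ b = S (J (L h)))
    {τ : ℝ} (hτ : 0 < τ) {f : ℝ → H} {K k : ℝ} (hK : 0 ≤ K) (hk : 0 < k)
    (hf : ∀ x ∈ Icc (0 : ℝ) τ, ∀ y ∈ Icc (0 : ℝ) τ, ‖f x - f y‖ ≤ K * |x - y| ^ k)
    {φp φm : H} (hφp : J φp = φp) (hφm : J φm = -φm) :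
    ∃ ψ : ℝ → H, ContinuousOn ψ (Icc 0 τ) ∧
      IsStrongSolutionOn (pmapComp J L) f ψ (Ioo 0 τ) ∧
      Pplus J (ψ 0) = φp ∧ Pminus J (ψ τ) = φm := by
  obtain ⟨Φ, hΦ⟩ := exists_isFunctionalCalculus hA
  set F : ℝ → H := fun x => S (f (projIcc 0 τ hτ.le x)) with hFdef
  have hF : ∀ x y, ‖F x - F y‖ ≤ ‖(S : H →L[ℂ] H)‖ * K * |x - y| ^ k :=
    norm_projIcc_sub_le hτ.le hK hk.le hf S
  have hFc : Continuous F := continuous_of_norm_sub_le hk hF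
  have hK' : 0 ≤ ‖(S : H →L[ℂ] H)‖ * K := by positivity
  obtain ⟨C, hC⟩ : ∃ C, ∀ x, ‖F x‖ ≤ C := by
    obtain ⟨C, hC⟩ := (isCompact_Icc (a := 0) (b := τ)).exists_bound_of_continuousOn
      hFc.continuousOn
    refine ⟨C, fun x => ?_⟩
    simpa [hFdef] using hC _ (projIcc 0 τ hτ.le x).2
  set p := particularSolution Φ τ F
  obtain ⟨w, hw⟩ := exists_boundary_value hJ hA hLsa hL hgraph hΦ hτ
    (φp + φm - Pplus J (S.symm (p 0)) - Pminus J (S.symm (p τ)))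
  refine ⟨fun x => S.symm (Φ (fermi τ x) w + p x), ?_, ⟨fun x => S.symm (F x -
    (Φ (fun y => y * fermi τ x y) w + particularImage Φ τ F x)), ?_, fun x hx => ⟨?_, ?_⟩⟩, ?_⟩
  · exact S.symm.continuous.comp_continuousOn ((continuousOn_fermi_apply hΦ hτ w).add
      (continuous_particularSolution hΦ hτ hFc hC).continuousOn)
  · exact S.symm.continuous.comp_continuousOn (hFc.continuousOn.sub
      (((continuousOn_mul_fermi hΦ).clm_apply continuousOn_const).add
        (continuousOn_particularImage hΦ hτ hFc hK' hk hF)))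
  · have h1 := ((hasDerivAt_fermi hΦ hx).complex_clm_apply (hasDerivAt_const x w)).fun_add
      (hasDerivAt_particularSolution hA hΦ hτ hFc hC hK' hk hF hx)
    refine ((hasDerivAt_const x (S.symm : H →L[ℂ] H)).complex_clm_apply h1).congr_deriv ?_
    simp only [zero_apply, zero_add, map_zero, add_zero,
      neg_apply, ContinuousLinearEquiv.coe_coe]
    congr 1
    abel
  · have hc := continuousAtEnds_fermi_of_mem_Ioo hx
    obtain ⟨h, e1, e2⟩ := hgraph _ _ (A.graph.add_mem (hΦ.mem_graph hc.1 hc.2 w)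
      (particularSolution_mem_graph hA hΦ hτ hFc hC hK' hk hF hx))
    have e3 : S.symm (Φ (fermi τ x) w + p x) = h := (congrArg S.symm e1).trans (by simp)
    have hmem : S.symm (Φ (fermi τ x) w + p x) ∈ (pmapComp J L).domain := e3 ▸ h.2
    have e4 : F x = S (f x) := by
      simp only [hFdef, projIcc_of_mem hτ.le (Ioo_subset_Icc_self hx)]
    refine ⟨hmem, ?_⟩
    have e5 : pmapComp J L ⟨S.symm (Φ (fermi τ x) w + p x), hmem⟩ = J (L h) :=
      congrArg (fun h => J (L h)) (Subtype.ext e3)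
    change Φ (fun y => y * fermi τ x y) w + particularImage Φ τ F x = S (J (L h)) at e2
    simp only [e5, e2, e4, ← map_sub, S.symm_apply_apply]
    abel
  · refine eq_of_Pplus_add_Pminus_eq hJ hφp hφm ?_
    simp only [map_add]
    rw [sub_sub, eq_sub_iff_add_eq] at hw
    rw [← hw]
    abel

end OperatorEquation

/-- Nonhomogeneous problem on `(0, τ)`: if `f` is Hölder continuous on
`[0, τ]`, then the boundary value problem `dψ/dx = -Bψ + f`, `P₊ψ(0) = φ₊`, `P₋ψ(τ) = φ₋`
has a unique strong solution. -/
theorem statement5 (J : H →L[ℂ] H) (hJ : IsSignatureOperator J)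
    (L : H →ₗ.[ℂ] H) (hdense : Dense (L.domain : Set H))
    (hLsa : IsSelfAdjoint L) (hLpos : IsPositivePMap L)
    (hsim : SimilarToSelfAdjoint (pmapComp J L))
    (τ : ℝ) (hτ : 0 < τ)
    (f : ℝ → H)
    (hf : ∃ K > (0 : ℝ), ∃ k ∈ Set.Ioc (0 : ℝ) 1,
      ∀ x ∈ Set.Icc (0 : ℝ) τ, ∀ y ∈ Set.Icc (0 : ℝ) τ, ‖f x - f y‖ ≤ K * |x - y| ^ k)
    (φp φm : H) (hφp : J φp = φp) (hφm : J φm = -φm) :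
    (∃ ψ : ℝ → H,
        ContinuousOn ψ (Set.Icc 0 τ) ∧
        IsStrongSolutionOn (pmapComp J L) f ψ (Set.Ioo 0 τ) ∧
        Pplus J (ψ 0) = φp ∧ Pminus J (ψ τ) = φm) ∧
    (∀ ψ₁ ψ₂ : ℝ → H,
        (ContinuousOn ψ₁ (Set.Icc 0 τ) ∧
          IsStrongSolutionOn (pmapComp J L) f ψ₁ (Set.Ioo 0 τ) ∧
          Pplus J (ψ₁ 0) = φp ∧ Pminus J (ψ₁ τ) = φm) →
        (ContinuousOn ψ₂ (Set.Icc 0 τ) ∧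
          IsStrongSolutionOn (pmapComp J L) f ψ₂ (Set.Ioo 0 τ) ∧
          Pplus J (ψ₂ 0) = φp ∧ Pminus J (ψ₂ τ) = φm) →
        Set.EqOn ψ₁ ψ₂ (Set.Icc 0 τ)) := by
  refine ⟨?_, fun ψ₁ ψ₂ h₁ h₂ => ?_⟩
  · obtain ⟨S, A, hA, hdom, hAS⟩ := hsim
    obtain ⟨K, hK, k, hk, hf⟩ := hf
    exact exists_strongSolution hJ hA hLsa hLpos
      (fun _ _ => exists_of_mem_graph_of_similar hdom hAS) hτ hK.le hk.1 hf hφp hφm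
  · have h := eqOn_zero_of_homogeneous hJ hLpos hτ (h₁.1.sub h₂.1)
      (fun x hx => h₁.2.1.exists_hasDerivAt_sub h₂.2.1 hx)
      (by simp [h₁.2.2.1, h₂.2.2.1]) (by simp [h₁.2.2.2, h₂.2.2.2])
    exact fun x hx => sub_eq_zero.1 (h hx)

end
end
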